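/- Let Λ and Ρ be disjoint finite sets, and let L_1 ≻ ⋯ ≻ L_s and R_1 ≻ ⋯ ≻ R_s be two sequences of s successively refined equitable partitions of Λ and Ρ respectively, satisfying for every i ≥ 1: (1) |R_i| is a power of 2 and |R_1| ≥ 2^200; (2) |R_{i+1}| ≥ 4|R_i| whenever i < s; (3) |L_i| = 2^(|R_i|/2^(i+10)). Then there exists a sequence G_1 ≻ ⋯ ≻ G_s of successively refined partitions of the edge set of the complete bipartite graph with classes (Λ,Ρ) into bipartite graphs with equally many edges each, such that for every 1 ≤ j ≤ s one has |G_j| = 2^j, and the following holds for every G ∈ G_j and every δ ≤ 2^(−20): for every ⟨δ⟩-regular vertex partition P ∪ Q of the bipartite graph G, where P is a partition of Λ and Q is a partition of Ρ, and every 1 ≤ i ≤ j, if Q ≺_{2^(−9)} R_i then P ≺_γ L_i, where γ = max{2^5·√δ, 32/|R_1|^(1/6)}. -/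

import Mathlib

open scoped Classical

noncomputable section

/-- The number of edges of a bipartite graph `G` between vertex subsets `A` and `B`. -/
def bmEdges {α β : Type*} (G : Finset (α × β)) (A : Finset α) (B : Finset β) : ℕ :=
  (G.filter fun p => p.1 ∈ A ∧ p.2 ∈ B).card

/-- The edge density of a bipartite graph `G` between `A` and `B`. -/
def bmDens {α β : Type*} (G : Finset (α × β)) (A : Finset α) (B : Finset β) : ℝ :=
  (bmEdges G A B : ℝ) / ((A.card : ℝ) * (B.card : ℝ))

/-- `⟨δ⟩`-regularity of a bipartite graph `G` on vertex classes `(A, B)`: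
for all `A' ⊆ A`, `B' ⊆ B` with `|A'| ≥ δ|A|`, `|B'| ≥ δ|B|` we have
`d_G(A',B') ≥ (1/2) d_G(A,B)`. -/
def DeltaReg {α β : Type*} (δ : ℝ) (G : Finset (α × β)) (A : Finset α) (B : Finset β) : Prop :=
  ∀ A' ⊆ A, ∀ B' ⊆ B, δ * (A.card : ℝ) ≤ (A'.card : ℝ) → δ * (B.card : ℝ) ≤ (B'.card : ℝ) →
    bmDens G A' B' ≥ (1 / 2) * bmDens G A B

/-- Szemerédi `ε`-regularity of a bipartite graph on `(A, B)`. -/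
def SzReg {α β : Type*} (ε : ℝ) (G : Finset (α × β)) (A : Finset α) (B : Finset β) : Prop :=
  ∀ A' ⊆ A, ∀ B' ⊆ B, ε * (A.card : ℝ) ≤ (A'.card : ℝ) → ε * (B.card : ℝ) ≤ (B'.card : ℝ) →
    |bmDens G A' B' - bmDens G A B| ≤ ε

/-- `P` is a partition of the finite set `S` (into nonempty parts). -/
def IsPartition {α : Type*} (P : Finset (Finset α)) (S : Finset α) : Prop :=
  (∀ p ∈ P, p.Nonempty) ∧ (∀ p ∈ P, p ⊆ S) ∧ ∀ v ∈ S, ∃! p, p ∈ P ∧ v ∈ p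

/-- `Q` refines `P`: every member of `Q` is contained in a member of `P`. -/
def Refines {α : Type*} (Q P : Finset (Finset α)) : Prop :=
  ∀ q ∈ Q, ∃ p ∈ P, q ⊆ p

/-- All parts of `P` have the same size. -/
def EquitableParts {α : Type*} (P : Finset (Finset α)) : Prop :=
  ∀ p ∈ P, ∀ q ∈ P, p.card = q.card

/-- `S ⊆_β T`, i.e. `|S \ T| < β |S|`. -/
def ApproxSub {α : Type*} [DecidableEq α] (β' : ℝ) (S T : Finset α) : Prop :=
  ((S \ T).card : ℝ) < β' * (S.card : ℝ)

/-- `S ∈_β P`, i.e. `S ⊆_β p` for some `p ∈ P`. -/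
def ApproxMem {α : Type*} [DecidableEq α] (β' : ℝ) (S : Finset α) (P : Finset (Finset α)) :
    Prop :=
  ∃ p ∈ P, ApproxSub β' S p

/-- `Q ≺_β P` for partitions `Q`, `P` of the set `S`. -/
def ApproxRefines {α : Type*} [DecidableEq α] (β' : ℝ) (Q P : Finset (Finset α))
    (S : Finset α) : Prop :=
  ∑ q ∈ Q.filter fun q => ¬ ApproxMem β' q P, (q.card : ℝ) ≤ β' * (S.card : ℝ)

/-- The vertex partition `P ∪ Q` of a bipartite graph `G` on vertex classes `(L, R)` is
`⟨δ⟩`-regular: one can add/remove at most `δ·e(G)` edges so that the bipartite graph induced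
on each pair of distinct parts is `⟨δ⟩`-regular. -/
def DeltaRegPartition {α β : Type*} [DecidableEq α] [DecidableEq β]
    (δ : ℝ) (G : Finset (α × β)) (L : Finset α) (R : Finset β)
    (P : Finset (Finset α)) (Q : Finset (Finset β)) : Prop :=
  ∃ G' : Finset (α × β), G' ⊆ L ×ˢ R ∧
    ((G' \ G).card : ℝ) + ((G \ G').card : ℝ) ≤ δ * (G.card : ℝ) ∧
    ∀ A ∈ P, ∀ B ∈ Q, DeltaReg δ G' A B

/-- The vertex partition `P ∪ Q` of a bipartite graph `G` is perfectly `⟨δ⟩`-regular: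
without modifying any edges, each pair of distinct parts induces a `⟨δ⟩`-regular graph. -/
def PerfectDeltaRegPartition {α β : Type*} (δ : ℝ) (G : Finset (α × β))
    (P : Finset (Finset α)) (Q : Finset (Finset β)) : Prop :=
  ∀ A ∈ P, ∀ B ∈ Q, DeltaReg δ G A B

/-- A 2-partition `(Z, E)` on the vertex set `S`: `Z` partitions `S`, the members of `E` are
pairwise edge-disjoint bipartite graphs between distinct parts of `Z`, and for all distinct
`Z1, Z2 ∈ Z` the complete bipartite graph `Z1 × Z2` is the union of the members of `E`
between `Z1` and `Z2`. -/
def Is2Partition {α : Type*} [DecidableEq α]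
    (Z : Finset (Finset α)) (E : Finset (Finset (α × α))) (S : Finset α) : Prop :=
  IsPartition Z S ∧
  (∀ g ∈ E, ∃ Z1 ∈ Z, ∃ Z2 ∈ Z, Z1 ≠ Z2 ∧ g ⊆ Z1 ×ˢ Z2) ∧
  (∀ g ∈ E, ∀ g' ∈ E, g ≠ g' → Disjoint g g') ∧
  ∀ Z1 ∈ Z, ∀ Z2 ∈ Z, Z1 ≠ Z2 → ∀ p ∈ Z1 ×ˢ Z2, ∃ g ∈ E, g ⊆ Z1 ×ˢ Z2 ∧ p ∈ g

/-- The parts of `Z` contained in `A` (e.g. `Z_i`, the restriction of `Z` to `V_i`). -/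
def partsIn {α : Type*} [DecidableEq α] (Z : Finset (Finset α)) (A : Finset α) :
    Finset (Finset α) :=
  Z.filter fun z => z ⊆ A

/-- The members of `E` contained in `A × B` (e.g. `E_i`). -/
def graphsIn {α : Type*} [DecidableEq α] (E : Finset (Finset (α × α))) (A B : Finset α) :
    Finset (Finset (α × α)) :=
  E.filter fun g => g ⊆ A ×ˢ B

/-- `H` is a 3-partite 3-graph on the (disjoint) vertex classes `(V1, V2, V3)`. -/
def Is3Partite {α : Type*} (H : Finset (α × α × α)) (V1 V2 V3 : Finset α) : Prop :=
  (Disjoint V1 V2 ∧ Disjoint V1 V3 ∧ Disjoint V2 V3) ∧ H ⊆ V1 ×ˢ V2 ×ˢ V3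

/-- The auxiliary bipartite graph `G_H^1` on `(V2 × V3, V1)`. -/
def GH1 {α : Type*} [DecidableEq α] (H : Finset (α × α × α)) : Finset ((α × α) × α) :=
  H.image fun t => ((t.2.1, t.2.2), t.1)

/-- The auxiliary bipartite graph `G_H^2` on `(V1 × V3, V2)`. -/
def GH2 {α : Type*} [DecidableEq α] (H : Finset (α × α × α)) : Finset ((α × α) × α) :=
  H.image fun t => ((t.1, t.2.2), t.2.1)

/-- The auxiliary bipartite graph `G_H^3` on `(V1 × V2, V3)`. -/
def GH3 {α : Type*} [DecidableEq α] (H : Finset (α × α × α)) : Finset ((α × α) × α) :=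
  H.image fun t => ((t.1, t.2.1), t.2.2)

/-- The 2-partition `(Z, E)` is `⟨δ⟩`-good: every bipartite graph in `E` (between any two
distinct vertex clusters of `Z`) is `⟨δ⟩`-regular. -/
def DeltaGood {α : Type*} [DecidableEq α] (δ : ℝ)
    (Z : Finset (Finset α)) (E : Finset (Finset (α × α))) : Prop :=
  ∀ g ∈ E, ∀ Z1 ∈ Z, ∀ Z2 ∈ Z, Z1 ≠ Z2 → g ⊆ Z1 ×ˢ Z2 → DeltaReg δ g Z1 Z2

/-- `(Z, E)` is a `⟨δ⟩`-regular partition of the 3-partite 3-graph `H` on `(V1, V2, V3)`: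
it is a `⟨δ⟩`-good 2-partition with `Z ≺ {V1, V2, V3}` and, for each `1 ≤ i ≤ 3`,
`E_i ∪ Z_i` is a `⟨δ⟩`-regular vertex partition of `G_H^i`. -/
def Delta3RegPartition {α : Type*} [DecidableEq α] (δ : ℝ) (H : Finset (α × α × α))
    (V1 V2 V3 : Finset α) (Z : Finset (Finset α)) (E : Finset (Finset (α × α))) : Prop :=
  Is2Partition Z E (V1 ∪ V2 ∪ V3) ∧ Refines Z {V1, V2, V3} ∧ DeltaGood δ Z E ∧
  DeltaRegPartition δ (GH1 H) (V2 ×ˢ V3) V1 (graphsIn E V2 V3) (partsIn Z V1) ∧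
  DeltaRegPartition δ (GH2 H) (V1 ×ˢ V3) V2 (graphsIn E V1 V3) (partsIn Z V2) ∧
  DeltaRegPartition δ (GH3 H) (V1 ×ˢ V2) V3 (graphsIn E V1 V2) (partsIn Z V3)

/-- The tower function: `twr 0 = 1` and `twr (x+1) = 2 ^ twr x`. -/
def twr : ℕ → ℕ
  | 0 => 1
  | n + 1 => 2 ^ twr n

/-- The wowzer function: `twr` iterated `x` times, applied to `1`. -/
def wow (x : ℕ) : ℕ := twr^[x] 1

/-- The set of triangles of the triad given by bipartite graphs `e1`, `e2`, `e3`: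
triples `(a, b, c)` with `(a,b) ∈ e1`, `(a,c) ∈ e2` and `(b,c) ∈ e3`. -/
def tri {α β γ : Type*} [DecidableEq α] [DecidableEq β] [DecidableEq γ]
    (e1 : Finset (α × β)) (e2 : Finset (α × γ)) (e3 : Finset (β × γ)) :
    Finset (α × β × γ) :=
  ((e1 ×ˢ e3).filter fun q => q.1.2 = q.2.1 ∧ (q.1.1, q.2.2) ∈ e2).image
    fun q => (q.1.1, q.1.2, q.2.2)

/-- The density `d_H(P)` of a triad `P = (e1, e2, e3)` in the 3-graph `H`. -/
def triDens {α : Type*} [DecidableEq α] (H : Finset (α × α × α))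
    (e1 e2 e3 : Finset (α × α)) : ℝ :=
  ((H ∩ tri e1 e2 e3).card : ℝ) / ((tri e1 e2 e3).card : ℝ)

/-- The triad `(e1, e2, e3)` is `ε`-regular in the 3-graph `H`: every subtriad `(f1, f2, f3)`
with `t(P') ≥ ε t(P)` satisfies `|d_H(P') - d_H(P)| ≤ ε`. -/
def TriadReg {α : Type*} [DecidableEq α] (ε : ℝ) (H : Finset (α × α × α))
    (e1 e2 e3 : Finset (α × α)) : Prop :=
  ∀ f1 ⊆ e1, ∀ f2 ⊆ e2, ∀ f3 ⊆ e3,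
    ε * ((tri e1 e2 e3).card : ℝ) ≤ ((tri f1 f2 f3).card : ℝ) →
    |triDens H f1 f2 f3 - triDens H e1 e2 e3| ≤ ε

/-- The triads of the 2-partition `(Z, E)`: triples of members of `E` forming a tripartite
graph on three distinct parts of `Z`. -/
def triads {α : Type*} [DecidableEq α] (Z : Finset (Finset α))
    (E : Finset (Finset (α × α))) :
    Finset (Finset (α × α) × Finset (α × α) × Finset (α × α)) :=
  (E ×ˢ E ×ˢ E).filter fun e => ∃ Z1 ∈ Z, ∃ Z2 ∈ Z, ∃ Z3 ∈ Z,
    Z1 ≠ Z2 ∧ Z1 ≠ Z3 ∧ Z2 ≠ Z3 ∧ e.1 ⊆ Z1 ×ˢ Z2 ∧ e.2.1 ⊆ Z1 ×ˢ Z3 ∧ e.2.2 ⊆ Z2 ×ˢ Z3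

/-- An `(ℓ, t, ε₂)`-equipartition on `S`: a 2-partition `(Z, E)` where `Z` is an equitable
partition of order `t` and every graph in `E` is `ε₂`-regular of density `ℓ⁻¹ ± ε₂`. -/
def IsEquipartition23 {α : Type*} [DecidableEq α] (ℓ t : ℕ) (ε₂ : ℝ)
    (Z : Finset (Finset α)) (E : Finset (Finset (α × α))) (S : Finset α) : Prop :=
  Is2Partition Z E S ∧ EquitableParts Z ∧ Z.card = t ∧
  ∀ g ∈ E, ∀ Z1 ∈ Z, ∀ Z2 ∈ Z, Z1 ≠ Z2 → g ⊆ Z1 ×ˢ Z2 →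
    SzReg ε₂ g Z1 Z2 ∧ |bmDens g Z1 Z2 - 1 / (ℓ : ℝ)| ≤ ε₂

/-- The `(ℓ,t,ε₂)`-equipartition `(Z, E)` is an `ε`-regular partition of the 3-graph `H`
with vertex set `S` (Frankl–Rödl): `Σ t(P) ≤ ε |S|³`, summed over non-`ε`-regular triads. -/
def FRRegPartition {α : Type*} [DecidableEq α] (ε : ℝ) (H : Finset (α × α × α))
    (S : Finset α) (Z : Finset (Finset α)) (E : Finset (Finset (α × α))) : Prop :=
  ∑ e ∈ (triads Z E).filter fun e => ¬ TriadReg ε H e.1 e.2.1 e.2.2,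
    ((tri e.1 e.2.1 e.2.2).card : ℝ) ≤ ε * (S.card : ℝ) ^ 3

/-- The function `f` from the definition of quasirandomness of a triad. -/
def fQ {α : Type*} [DecidableEq α] (H : Finset (α × α × α)) (e1 e2 e3 : Finset (α × α))
    (x y z : α) : ℝ :=
  if (x, y, z) ∈ tri e1 e2 e3 then
    (if (x, y, z) ∈ H then 1 - triDens H e1 e2 e3 else -triDens H e1 e2 e3)
  else 0

/-- The octahedron sum from the definition of quasirandomness. -/
def octSum {α : Type*} [DecidableEq α] (H : Finset (α × α × α)) (e1 e2 e3 : Finset (α × α))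
    (X Y Z : Finset α) : ℝ :=
  ∑ x0 ∈ X, ∑ x1 ∈ X, ∑ y0 ∈ Y, ∑ y1 ∈ Y, ∑ z0 ∈ Z, ∑ z1 ∈ Z,
    fQ H e1 e2 e3 x0 y0 z0 * fQ H e1 e2 e3 x0 y0 z1 * fQ H e1 e2 e3 x0 y1 z0 *
      fQ H e1 e2 e3 x0 y1 z1 * fQ H e1 e2 e3 x1 y0 z0 * fQ H e1 e2 e3 x1 y0 z1 *
      fQ H e1 e2 e3 x1 y1 z0 * fQ H e1 e2 e3 x1 y1 z1

/-- The triad `(e1, e2, e3)` on vertex classes `(X, Y, Z)` with `d(e1) = d(e2) = d(e3) = d`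
and `|X| = |Y| = |Z| = n` is `a`-quasirandom in `H`: the octahedron sum is at most
`a d¹² n⁶`. -/
def Quasirandom {α : Type*} [DecidableEq α] (a : ℝ) (H : Finset (α × α × α))
    (e1 e2 e3 : Finset (α × α)) (X Y Z : Finset α) : Prop :=
  ∀ (d : ℝ) (n : ℕ), bmDens e1 X Y = d → bmDens e2 X Z = d → bmDens e3 Y Z = d →
    X.card = n → Y.card = n → Z.card = n →
    octSum H e1 e2 e3 X Y Z ≤ a * d ^ 12 * (n : ℝ) ^ 6

/-- The `(ℓ,t,ε₂)`-equipartition `(Z, E)` is an `a`-quasirandom partition of the 3-graph `H`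
with vertex set `S`: `Σ t(P) ≤ a |S|³`, summed over non-`a`-quasirandom triads. -/
def QuasirandomPartition {α : Type*} [DecidableEq α] (a : ℝ) (H : Finset (α × α × α))
    (S : Finset α) (Z : Finset (Finset α)) (E : Finset (Finset (α × α))) : Prop :=
  ∑ e ∈ (E ×ˢ E ×ˢ E).filter fun e => ∃ Z1 ∈ Z, ∃ Z2 ∈ Z, ∃ Z3 ∈ Z,
      Z1 ≠ Z2 ∧ Z1 ≠ Z3 ∧ Z2 ≠ Z3 ∧
      e.1 ⊆ Z1 ×ˢ Z2 ∧ e.2.1 ⊆ Z1 ×ˢ Z3 ∧ e.2.2 ⊆ Z2 ×ˢ Z3 ∧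
      ¬ Quasirandom a H e.1 e.2.1 e.2.2 Z1 Z2 Z3,
    ((tri e.1 e.2.1 e.2.2).card : ℝ) ≤ a * (S.card : ℝ) ^ 3

/-- `e(i) = 2^(i+10)`. -/
def efn (i : ℕ) : ℕ := 2 ^ (i + 10)

/-- `t(1) = 2^250` and `t(i+1) = 2^(t(i)/e(i))` for `i ≥ 1`. -/
def tfn : ℕ → ℕ
  | 0 => 0
  | 1 => 2 ^ 250
  | n + 2 => 2 ^ (tfn (n + 1) / efn (n + 1))

/-- `w(1) = 1` and `w(i+1) = w*(i) = t(w(i))/e(i)` for `i ≥ 1`. -/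
def wfn : ℕ → ℕ
  | 0 => 0
  | 1 => 1
  | n + 2 => tfn (wfn (n + 1)) / efn (n + 1)

/-- `w*(s) = t(w(s))/e(s)`. -/
def wstar (s : ℕ) : ℕ := tfn (wfn s) / efn s

end

noncomputable section

/-! ### Random signs -/

/-- The sign vector of a subset. -/
def sgn {ι : Type*} (A : Finset ι) (i : ι) : ℝ := if i ∈ A then 1 else -1

lemma sgn_cases {ι : Type*} (A : Finset ι) (i : ι) : sgn A i = 1 ∨ sgn A i = -1 := by
  unfold sgn; split_ifs <;> simp

lemma sgn_flip_self {ι : Type*} [DecidableEq ι] (A : Finset ι) (u : ι) :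
    sgn (symmDiff A {u}) u = - sgn A u := by
  unfold sgn
  by_cases h : u ∈ A <;> simp [Finset.mem_symmDiff, h]

lemma sgn_flip_ne {ι : Type*} [DecidableEq ι] (A : Finset ι) (u i : ι) (h : i ≠ u) :
    sgn (symmDiff A {u}) i = sgn A i := by
  unfold sgn
  simp [Finset.mem_symmDiff, h]

lemma sum_flip {ι : Type*} [DecidableEq ι] (U : Finset ι) (u : ι) (hu : u ∈ U)
    (F : Finset ι → ℝ) :
    ∑ A ∈ U.powerset, F (symmDiff A {u}) = ∑ A ∈ U.powerset, F A := by
  have hm : ∀ A ∈ U.powerset, symmDiff A {u} ∈ U.powerset := by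
    intro A hA
    rw [Finset.mem_powerset] at *
    intro i hi
    rw [Finset.mem_symmDiff] at hi
    rcases hi with hi | hi
    · exact hA hi.1
    · have := Finset.mem_singleton.1 hi.1
      rw [this]; exact hu
  refine Finset.sum_nbij' (fun A => symmDiff A {u}) (fun A => symmDiff A {u}) hm hm ?_ ?_ ?_
  · intro A _; simp
  · intro A _; simp
  · intro A _; rfl

lemma signs_mgf {ι : Type*} [DecidableEq ι] (U : Finset ι) (θ : ℝ) (W : Finset (ι × ι)) :
    (∀ q ∈ W, q.1 ∈ U) → (∀ q ∈ W, ∀ q' ∈ W, q.1 = q'.1 → q = q') →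
    (∀ q ∈ W, ∀ q' ∈ W, q.1 ≠ q'.2) →
    ∑ A ∈ U.powerset, Real.exp (θ * ∑ q ∈ W, sgn A q.1 * sgn A q.2)
      = 2 ^ U.card * Real.cosh θ ^ W.card := by
  induction W using Finset.induction_on with
  | empty => intro _ _ _; simp
  | insert q0 W hq0 ih =>
    intro h1 h2 h3
    have ih' := ih (fun q hq => h1 q (Finset.mem_insert_of_mem hq))
      (fun q hq q' hq' => h2 q (Finset.mem_insert_of_mem hq) q' (Finset.mem_insert_of_mem hq'))
      (fun q hq q' hq' => h3 q (Finset.mem_insert_of_mem hq) q' (Finset.mem_insert_of_mem hq'))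
    have hs := Finset.mem_insert_self q0 W
    have e1 : ∀ A : Finset ι, Real.exp (θ * ∑ q ∈ insert q0 W, sgn A q.1 * sgn A q.2)
        = Real.exp (θ * ∑ q ∈ W, sgn A q.1 * sgn A q.2) *
          Real.exp (θ * (sgn A q0.1 * sgn A q0.2)) := by
      intro A
      rw [Finset.sum_insert hq0, ← Real.exp_add]; ring_nf
    simp_rw [e1]
    have hfl := sum_flip U q0.1 (h1 q0 hs)
      (fun A => Real.exp (θ * ∑ q ∈ W, sgn A q.1 * sgn A q.2) *
          Real.exp (θ * (sgn A q0.1 * sgn A q0.2)))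
    have e2 : ∀ A : Finset ι,
        Real.exp (θ * ∑ q ∈ W, sgn (symmDiff A {q0.1}) q.1 * sgn (symmDiff A {q0.1}) q.2) *
          Real.exp (θ * (sgn (symmDiff A {q0.1}) q0.1 * sgn (symmDiff A {q0.1}) q0.2))
        = Real.exp (θ * ∑ q ∈ W, sgn A q.1 * sgn A q.2) *
          Real.exp (-(θ * (sgn A q0.1 * sgn A q0.2))) := by
      intro A
      have : ∑ q ∈ W, sgn (symmDiff A {q0.1}) q.1 * sgn (symmDiff A {q0.1}) q.2
          = ∑ q ∈ W, sgn A q.1 * sgn A q.2 := by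
        refine Finset.sum_congr rfl fun q hq => ?_
        have hqi := Finset.mem_insert_of_mem (a := q) (b := q0) hq
        rw [sgn_flip_ne, sgn_flip_ne]
        · exact fun h => h3 q0 hs q hqi h.symm
        · intro h
          have := h2 q hqi q0 hs h
          rw [this] at hq
          exact hq0 hq
      rw [this, sgn_flip_self, sgn_flip_ne _ _ _ (fun h => h3 q0 hs q0 hs h.symm)]
      ring_nf
    simp only [e2] at hfl
    have e3 : ∀ A : Finset ι, Real.exp (θ * (sgn A q0.1 * sgn A q0.2)) +
        Real.exp (-(θ * (sgn A q0.1 * sgn A q0.2))) = 2 * Real.cosh θ := by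
      intro A
      rw [Real.cosh_eq]
      rcases sgn_cases A q0.1 with h | h <;> rcases sgn_cases A q0.2 with h' | h' <;>
        rw [h, h'] <;> ring_nf
    have e4 : 2 * ∑ A ∈ U.powerset, Real.exp (θ * ∑ q ∈ W, sgn A q.1 * sgn A q.2) *
          Real.exp (θ * (sgn A q0.1 * sgn A q0.2)) =
        2 * Real.cosh θ * ∑ A ∈ U.powerset, Real.exp (θ * ∑ q ∈ W, sgn A q.1 * sgn A q.2) := by
      rw [two_mul]
      nth_rewrite 2 [← hfl]
      rw [← Finset.sum_add_distrib, Finset.mul_sum]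
      refine Finset.sum_congr rfl fun A _ => ?_
      rw [← mul_add, e3]; ring
    rw [ih'] at e4
    rw [Finset.card_insert_of_notMem hq0, pow_succ]
    linarith

lemma signs_tail {ι : Type*} [DecidableEq ι] (U : Finset ι) (W : Finset (ι × ι))
    (h1 : ∀ q ∈ W, q.1 ∈ U) (h2 : ∀ q ∈ W, ∀ q' ∈ W, q.1 = q'.1 → q = q')
    (h3 : ∀ q ∈ W, ∀ q' ∈ W, q.1 ≠ q'.2) (lam : ℝ) (hl : 0 ≤ lam) (hW : 0 < W.card) :
    ((U.powerset.filter fun A => lam < |∑ q ∈ W, sgn A q.1 * sgn A q.2|).card : ℝ)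
      ≤ 2 * 2 ^ U.card * Real.exp (-(lam ^ 2 / (2 * W.card))) := by
  have hw : (0 : ℝ) < W.card := by exact_mod_cast hW
  set θ : ℝ := lam / W.card with hθ
  have hθ0 : 0 ≤ θ := by positivity
  have m1 := signs_mgf U θ W h1 h2 h3
  have m2 := signs_mgf U (-θ) W h1 h2 h3
  rw [Real.cosh_neg] at m2
  have hc : Real.cosh θ ^ W.card ≤ Real.exp (lam ^ 2 / (2 * W.card)) := by
    calc Real.cosh θ ^ W.card ≤ (Real.exp (θ ^ 2 / 2)) ^ W.card := by
          gcongr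
          exact Real.cosh_le_exp_half_sq θ
      _ = Real.exp (lam ^ 2 / (2 * W.card)) := by
          rw [← Real.exp_nat_mul, hθ]; congr 1; field_simp
  have key : ((U.powerset.filter fun A => lam < |∑ q ∈ W, sgn A q.1 * sgn A q.2|).card : ℝ)
      * Real.exp (θ * lam) ≤ 2 * 2 ^ U.card * Real.exp (lam ^ 2 / (2 * W.card)) := by
    calc _ = ∑ A ∈ U.powerset.filter fun A => lam < |∑ q ∈ W, sgn A q.1 * sgn A q.2|,
              Real.exp (θ * lam) := by simp
      _ ≤ ∑ A ∈ U.powerset.filter fun A => lam < |∑ q ∈ W, sgn A q.1 * sgn A q.2|,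
            (Real.exp (θ * ∑ q ∈ W, sgn A q.1 * sgn A q.2) +
              Real.exp (-θ * ∑ q ∈ W, sgn A q.1 * sgn A q.2)) := by
          refine Finset.sum_le_sum fun A hA => ?_
          have hA' := (Finset.mem_filter.1 hA).2
          rcases le_total 0 (∑ q ∈ W, sgn A q.1 * sgn A q.2) with h | h
          · rw [abs_of_nonneg h] at hA'
            have : Real.exp (θ * lam) ≤ Real.exp (θ * ∑ q ∈ W, sgn A q.1 * sgn A q.2) := by
              gcongr
            have := Real.exp_pos (-θ * ∑ q ∈ W, sgn A q.1 * sgn A q.2)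
            linarith
          · rw [abs_of_nonpos h] at hA'
            have : Real.exp (θ * lam) ≤ Real.exp (-θ * ∑ q ∈ W, sgn A q.1 * sgn A q.2) := by
              apply Real.exp_le_exp.2
              nlinarith
            have := Real.exp_pos (θ * ∑ q ∈ W, sgn A q.1 * sgn A q.2)
            linarith
      _ ≤ ∑ A ∈ U.powerset, (Real.exp (θ * ∑ q ∈ W, sgn A q.1 * sgn A q.2) +
              Real.exp (-θ * ∑ q ∈ W, sgn A q.1 * sgn A q.2)) := by
          refine Finset.sum_le_sum_of_subset_of_nonneg (Finset.filter_subset _ _) ?_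
          intros; positivity
      _ = 2 * 2 ^ U.card * Real.cosh θ ^ W.card := by
          rw [Finset.sum_add_distrib, m1, m2]; ring
      _ ≤ _ := by gcongr
  have e : Real.exp (θ * lam) = Real.exp (lam ^ 2 / (2 * W.card)) *
      Real.exp (lam ^ 2 / (2 * W.card)) := by
    rw [← Real.exp_add, hθ]; congr 1; field_simp; ring
  rw [e] at key
  rw [Real.exp_neg]
  have hp := Real.exp_pos (lam ^ 2 / (2 * W.card))
  rw [← div_eq_mul_inv, le_div_iff₀ hp]
  nlinarith

/-- Existence of signs passing all tests. -/
lemma exists_signs {ι : Type*} [DecidableEq ι] (U : Finset ι)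
    (tests : Finset (Finset (ι × ι) × ℝ)) (η : ℝ)
    (h1 : ∀ w ∈ tests, ∀ q ∈ w.1, q.1 ∈ U)
    (h2 : ∀ w ∈ tests, ∀ q ∈ w.1, ∀ q' ∈ w.1, q.1 = q'.1 → q = q')
    (h3 : ∀ w ∈ tests, ∀ q ∈ w.1, ∀ q' ∈ w.1, q.1 ≠ q'.2)
    (h4 : ∀ w ∈ tests, 0 < w.1.card)
    (h5 : ∀ w ∈ tests, 0 ≤ w.2 ∧ Real.exp (-(w.2 ^ 2 / (2 * w.1.card))) ≤ η)
    (h6 : tests.card * (2 * η) < 1) :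
    ∃ s : ι → ℝ, (∀ i, s i = 1 ∨ s i = -1) ∧
      ∀ w ∈ tests, |∑ q ∈ w.1, s q.1 * s q.2| ≤ w.2 := by
  by_contra hcon
  push Not at hcon
  have hall : ∀ A ∈ U.powerset, ∃ w ∈ tests, w.2 < |∑ q ∈ w.1, sgn A q.1 * sgn A q.2| :=
    fun A _ => hcon (sgn A) (sgn_cases A)
  have hsub : U.powerset ⊆ tests.biUnion fun w =>
      U.powerset.filter fun A => w.2 < |∑ q ∈ w.1, sgn A q.1 * sgn A q.2| := by
    intro A hA
    obtain ⟨w, hw, hlt⟩ := hall A hA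
    exact Finset.mem_biUnion.2 ⟨w, hw, Finset.mem_filter.2 ⟨hA, hlt⟩⟩
  have hcard := (Finset.card_le_card hsub).trans Finset.card_biUnion_le
  rw [Finset.card_powerset] at hcard
  have hcard' : (2 : ℝ) ^ U.card ≤ ∑ w ∈ tests, ((U.powerset.filter fun A =>
      w.2 < |∑ q ∈ w.1, sgn A q.1 * sgn A q.2|).card : ℝ) := by exact_mod_cast hcard
  have : ∑ w ∈ tests, ((U.powerset.filter fun A =>
      w.2 < |∑ q ∈ w.1, sgn A q.1 * sgn A q.2|).card : ℝ) ≤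
      ∑ w ∈ tests, 2 * 2 ^ U.card * η := by
    refine Finset.sum_le_sum fun w hw => ?_
    refine (signs_tail U w.1 (h1 w hw) (h2 w hw) (h3 w hw) w.2 (h5 w hw).1 (h4 w hw)).trans ?_
    exact mul_le_mul_of_nonneg_left (h5 w hw).2 (by positivity)
  rw [Finset.sum_const, nsmul_eq_mul] at this
  have hp : (0 : ℝ) < 2 ^ U.card := by positivity
  nlinarith

/-! ### Generic finset lemmas and pairing -/

lemma sum_closed {α β M : Type*} [DecidableEq β] [AddCommMonoid M] (S T : Finset α) (g : α → β) (hT : T ⊆ S)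
    (hcl : ∀ y ∈ T, ∀ y' ∈ S, g y' = g y → y' ∈ T) (F : α → M) :
    ∑ y ∈ T, F y = ∑ p ∈ T.image g, ∑ y ∈ S.filter (fun y => g y = p), F y := by
  rw [← Finset.sum_fiberwise_of_maps_to (g := g) (t := T.image g)
    (fun y hy => Finset.mem_image_of_mem g hy)]
  refine Finset.sum_congr rfl fun p hp => ?_
  obtain ⟨y0, hy0, rfl⟩ := Finset.mem_image.1 hp
  refine Finset.sum_congr ?_ fun _ _ => rfl
  ext y
  simp only [Finset.mem_filter]
  constructor
  · rintro ⟨h1, h2⟩; exact ⟨hT h1, h2⟩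
  · rintro ⟨h1, h2⟩; exact ⟨hcl y0 hy0 y h1 h2, h2⟩

lemma card_image_le_of_factor {α β γ : Type*} [DecidableEq β] [DecidableEq γ] (S : Finset α) (f : α → β) (g : α → γ)
    (h : ∀ a ∈ S, ∀ b ∈ S, g a = g b → f a = f b) : (S.image f).card ≤ (S.image g).card := by
  rcases S.eq_empty_or_nonempty with rfl | ⟨a0, _⟩
  · simp
  have hch : ∀ c : γ, ∃ a : α, c ∈ S.image g → a ∈ S ∧ g a = c := by
    intro c
    by_cases hc : c ∈ S.image g
    · obtain ⟨a, ha, hac⟩ := Finset.mem_image.1 hc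
      exact ⟨a, fun _ => ⟨ha, hac⟩⟩
    · exact ⟨a0, fun h => absurd h hc⟩
  choose rep hrep using hch
  have : S.image f ⊆ (S.image g).image (fun c => f (rep c)) := by
    intro b hb
    obtain ⟨a, ha, rfl⟩ := Finset.mem_image.1 hb
    have hg := Finset.mem_image_of_mem g ha
    refine Finset.mem_image.2 ⟨g a, hg, ?_⟩
    exact h _ (hrep _ hg).1 a ha (hrep _ hg).2
  exact (Finset.card_le_card this).trans Finset.card_image_le

lemma exists_enum {β : Type*} (S : Finset β) : ∃ e : β → ℕ,
    (∀ z ∈ S, ∀ z' ∈ S, e z = e z' → z = z') ∧ (∀ z ∈ S, e z < S.card) ∧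
    ∀ n < S.card, ∃ z ∈ S, e z = n := by
  refine ⟨fun z => if h : z ∈ S then (S.equivFin ⟨z, h⟩ : ℕ) else 0, ?_, ?_, ?_⟩
  · intro z hz z' hz' h
    simp only [hz, hz', dif_pos] at h
    have := S.equivFin.injective (Fin.ext h)
    simpa using this
  · intro z hz
    simp only [hz, dif_pos]
    exact (S.equivFin ⟨z, hz⟩).2
  · intro n hn
    refine ⟨(S.equivFin.symm ⟨n, hn⟩).1, (S.equivFin.symm ⟨n, hn⟩).2, ?_⟩
    simp

lemma exists_pairing {α β : Type*} [DecidableEq β] (Rs : Finset α) (r r' : α → β)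
    (hr : ∀ y ∈ Rs, ∀ y' ∈ Rs, r' y = r' y' → r y = r y') (ρ q : ℕ) (hρ : 0 < ρ)
    (hf : ∀ y ∈ Rs, (Rs.filter fun y' => r' y' = r' y).card = ρ)
    (hc : ∀ y ∈ Rs, (Rs.filter fun y' => r y' = r y).card = ρ * (2 * q)) :
    ∃ (d : α → β × ℕ) (b : α → ℝ), (∀ y, b y = 1 ∨ b y = -1) ∧
      (∀ y ∈ Rs, ∀ y' ∈ Rs, r' y = r' y' → d y = d y' ∧ b y = b y') ∧
      (∀ y y', d y = d y' → r y = r y') ∧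
      ∀ y ∈ Rs, ∑ y' ∈ Rs.filter (fun y' => d y' = d y), b y' = 0 ∧
        (Rs.filter fun y' => d y' = d y).card = 2 * ρ := by
  set S : β → Finset β := fun c => (Rs.filter fun y' => r y' = c).image r' with hS
  choose e he1 he2 he3 using fun c => exists_enum (S c)
  have hScard : ∀ y ∈ Rs, (S (r y)).card = 2 * q := by
    intro y hy
    have h1 := sum_closed (M := ℕ) Rs (Rs.filter fun y' => r y' = r y) r' (Finset.filter_subset _ _)
      (by
        intro z hz z' hz' h
        simp only [Finset.mem_filter] at hz ⊢
        exact ⟨hz', (hr z' hz' z hz.1 h).trans hz.2⟩) (fun _ => 1)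
    have h2 : ∀ p ∈ S (r y), ∑ y ∈ Rs.filter (fun y => r' y = p), 1 = ρ := by
      intro p hp
      obtain ⟨z, hz, rfl⟩ := Finset.mem_image.1 hp
      rw [← Finset.card_eq_sum_ones]
      exact hf z (Finset.mem_filter.1 hz).1
    rw [Finset.sum_congr rfl h2, ← Finset.card_eq_sum_ones, hc y hy, Finset.sum_const,
      smul_eq_mul] at h1
    have : ρ * (2 * q) = ρ * (S (r y)).card := by rw [h1, mul_comm]
    exact (Nat.eq_of_mul_eq_mul_left hρ this).symm
  refine ⟨fun y => (r y, e (r y) (r' y) / 2),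
    fun y => if e (r y) (r' y) % 2 = 0 then 1 else -1, ?_, ?_, ?_, ?_⟩
  · intro y; dsimp only; split_ifs <;> simp
  · intro y hy y' hy' h
    have := hr y hy y' hy' h
    dsimp only
    rw [h, this]
    exact ⟨rfl, rfl⟩
  · intro y y' h
    exact (Prod.ext_iff.1 h).1
  · intro y hy
    dsimp only
    have hmem : ∀ y' ∈ Rs, r y' = r y → r' y' ∈ S (r y) := by
      intro y' hy' h
      exact Finset.mem_image_of_mem r' (Finset.mem_filter.2 ⟨hy', h⟩)
    set a := e (r y) (r' y) / 2 with ha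
    have hlt := he2 (r y) (r' y) (hmem y hy rfl)
    rw [hScard y hy] at hlt
    obtain ⟨z0, hz0, ez0⟩ := he3 (r y) (2 * a) (by rw [hScard y hy]; omega)
    obtain ⟨z1, hz1, ez1⟩ := he3 (r y) (2 * a + 1) (by rw [hScard y hy]; omega)
    obtain ⟨y0, hy0, rfl⟩ := Finset.mem_image.1 hz0
    obtain ⟨y1, hy1, rfl⟩ := Finset.mem_image.1 hz1
    rw [Finset.mem_filter] at hy0 hy1
    have hsplit : Rs.filter (fun y' => (r y', e (r y') (r' y') / 2) = (r y, a)) =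
        Rs.filter (fun y' => r' y' = r' y0) ∪ Rs.filter (fun y' => r' y' = r' y1) := by
      ext y'
      simp only [Finset.mem_filter, Finset.mem_union, Prod.mk.injEq]
      constructor
      · rintro ⟨h1, h2, h3⟩
        rw [h2] at h3
        have hm := hmem y' h1 h2
        rcases Nat.mod_two_eq_zero_or_one (e (r y) (r' y')) with h | h
        · left
          exact ⟨h1, he1 _ _ hm _ hz0 (by omega)⟩
        · right
          exact ⟨h1, he1 _ _ hm _ hz1 (by omega)⟩
      · rintro (⟨h1, h2⟩ | ⟨h1, h2⟩)
        · have h3 := (hr y' h1 y0 hy0.1 h2).trans hy0.2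
          refine ⟨h1, h3, ?_⟩
          rw [h3, h2, ez0]; omega
        · have h3 := (hr y' h1 y1 hy1.1 h2).trans hy1.2
          refine ⟨h1, h3, ?_⟩
          rw [h3, h2, ez1]; omega
    have hdisj : Disjoint (Rs.filter (fun y' => r' y' = r' y0))
        (Rs.filter (fun y' => r' y' = r' y1)) := by
      rw [Finset.disjoint_left]
      intro y' h h'
      rw [Finset.mem_filter] at h h'
      have : r' y0 = r' y1 := h.2.symm.trans h'.2
      rw [this] at ez0
      omega
    rw [hsplit]
    constructor
    · rw [Finset.sum_union hdisj]
      have s0 : ∀ y' ∈ Rs.filter (fun y' => r' y' = r' y0),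
          (if e (r y') (r' y') % 2 = 0 then (1 : ℝ) else -1) = 1 := by
        intro y' h
        rw [Finset.mem_filter] at h
        have h3 := (hr y' h.1 y0 hy0.1 h.2).trans hy0.2
        rw [h3, h.2, ez0]; simp
      have s1 : ∀ y' ∈ Rs.filter (fun y' => r' y' = r' y1),
          (if e (r y') (r' y') % 2 = 0 then (1 : ℝ) else -1) = -1 := by
        intro y' h
        rw [Finset.mem_filter] at h
        have h3 := (hr y' h.1 y1 hy1.1 h.2).trans hy1.2
        rw [h3, h.2, ez1, if_neg (by omega)]
      rw [Finset.sum_congr rfl s0, Finset.sum_congr rfl s1]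
      simp only [Finset.sum_const, hf y0 hy0.1, hf y1 hy1.1]
      simp
    · rw [Finset.card_union_of_disjoint hdisj, hf y0 hy0.1, hf y1 hy1.1]; ring

/-! ### One step of the construction -/

lemma sq_sum_bound {β γ : Type*} [DecidableEq γ] (Ch : Finset β) (D : Finset γ) (s : β → γ → ℝ) (g : γ → ℝ)
    (c K N : ℝ) (hK : 0 ≤ K) (hN : 0 < N) (hCh : (Ch.card : ℝ) = K) (hD : (D.card : ℝ) = N)
    (hc : 0 ≤ c) (hg : ∀ p ∈ D, |g p| ≤ c) (hs : ∀ X p, s X p = 1 ∨ s X p = -1)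
    (hcol : ∀ p ∈ D, ∀ p' ∈ D, p ≠ p' → |∑ X ∈ Ch, s X p * s X p'| ≤ K / N) :
    ∑ X ∈ Ch, (∑ p ∈ D, s X p * g p) ^ 2 ≤ 2 * c ^ 2 * N * K := by
  have e1 : ∑ X ∈ Ch, (∑ p ∈ D, s X p * g p) ^ 2 =
      ∑ p ∈ D, ∑ p' ∈ D, (g p * g p') * ∑ X ∈ Ch, s X p * s X p' := by
    have : ∀ X ∈ Ch, (∑ p ∈ D, s X p * g p) ^ 2 =
        ∑ p ∈ D, ∑ p' ∈ D, (g p * g p') * (s X p * s X p') := by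
      intro X _
      rw [sq, Finset.sum_mul_sum]
      refine Finset.sum_congr rfl fun p _ => Finset.sum_congr rfl fun p' _ => by ring
    rw [Finset.sum_congr rfl this, Finset.sum_comm]
    refine Finset.sum_congr rfl fun p _ => ?_
    rw [Finset.sum_comm]
    refine Finset.sum_congr rfl fun p' _ => ?_
    rw [Finset.mul_sum]
  rw [e1]
  have e2 : ∀ p ∈ D, ∀ p' ∈ D, (g p * g p') * ∑ X ∈ Ch, s X p * s X p' ≤
      c ^ 2 * (if p = p' then K else 0) + c ^ 2 * (K / N) := by
    intro p hp p' hp'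
    have hgg : |g p * g p'| ≤ c ^ 2 := by
      rw [abs_mul, sq]
      exact mul_le_mul (hg p hp) (hg p' hp') (abs_nonneg _) hc
    have hKN : 0 ≤ K / N := by positivity
    have hb : |∑ X ∈ Ch, s X p * s X p'| ≤ (if p = p' then K else 0) + K / N := by
      split_ifs with h
      · subst h
        have : ∑ X ∈ Ch, s X p * s X p = K := by
          rw [← hCh]
          have : ∀ X ∈ Ch, s X p * s X p = 1 := by
            intro X _; rcases hs X p with h | h <;> rw [h] <;> norm_num
          rw [Finset.sum_congr rfl this]; simp
        rw [this, abs_of_nonneg hK]; linarith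
      · have := hcol p hp p' hp' h; linarith
    calc _ ≤ |(g p * g p') * ∑ X ∈ Ch, s X p * s X p'| := le_abs_self _
      _ = |g p * g p'| * |∑ X ∈ Ch, s X p * s X p'| := abs_mul _ _
      _ ≤ c ^ 2 * ((if p = p' then K else 0) + K / N) :=
          mul_le_mul hgg hb (abs_nonneg _) (by positivity)
      _ = _ := by ring
  refine (Finset.sum_le_sum fun p hp => Finset.sum_le_sum fun p' hp' => e2 p hp p' hp').trans ?_
  have e3 : ∀ p ∈ D, ∑ p' ∈ D, (c ^ 2 * (if p = p' then K else 0) + c ^ 2 * (K / N)) =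
      2 * c ^ 2 * K := by
    intro p hp
    rw [Finset.sum_add_distrib, ← Finset.mul_sum, Finset.sum_ite_eq, if_pos hp, Finset.sum_const,
      nsmul_eq_mul, hD]
    field_simp; ring
  rw [Finset.sum_congr rfl e3, Finset.sum_const, nsmul_eq_mul, hD]
  apply le_of_eq; ring

lemma step_construction {α β γ : Type*} [DecidableEq β] [DecidableEq γ] (Ls Rs : Finset α) (l l' r r' : α → β) (h : α → α → γ)
    (hl : ∀ x ∈ Ls, ∀ x' ∈ Ls, l' x = l' x' → l x = l x')
    (hr : ∀ y ∈ Rs, ∀ y' ∈ Rs, r' y = r' y' → r y = r y')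
    (lam ρ q K N : ℕ) (hρ : 0 < ρ) (hlam : 0 < lam) (hK : 0 < K) (hN : 0 < N)
    (hlf : ∀ x ∈ Ls, (Ls.filter fun x' => l' x' = l' x).card = lam)
    (hlc : ∀ x ∈ Ls, (Ls.filter fun x' => l x' = l x).card = lam * K)
    (hrf : ∀ y ∈ Rs, (Rs.filter fun y' => r' y' = r' y).card = ρ)
    (hrc : ∀ y ∈ Rs, (Rs.filter fun y' => r y' = r y).card = ρ * (2 * q))
    (hconst : ∀ x ∈ Ls, ∀ x' ∈ Ls, ∀ y ∈ Rs, ∀ y' ∈ Rs, l x = l x' → r y = r y' →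
      h x y = h x' y')
    (hclass : ∀ x ∈ Ls, ∀ y ∈ Rs, (Rs.filter fun y' => h x y' = h x y).card = 2 * ρ * N)
    (hnum : (((Ls.image l').card : ℝ) ^ 2 * (Rs.image r').card +
      (Ls.image l).card * ((Rs.image r').card : ℝ) ^ 2) * (2 * Real.exp (-(N / 512 : ℝ))) < 1)
    (hKN : (N : ℝ) ^ 3 ≤ 256 * K) :
    ∃ v : α → α → ℝ, (∀ x y, v x y = 1 ∨ v x y = -1) ∧
      (∀ x ∈ Ls, ∀ x' ∈ Ls, ∀ y ∈ Rs, ∀ y' ∈ Rs, l' x = l' x' → r' y = r' y' →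
        v x y = v x' y') ∧
      (∀ x ∈ Ls, ∀ y ∈ Rs, ∑ y' ∈ Rs.filter (fun y' => r y' = r y), v x y' = 0) ∧
      (∀ x ∈ Ls, ∀ x' ∈ Ls, l' x ≠ l' x' → ∀ y ∈ Rs,
        ∑ y' ∈ Rs.filter (fun y' => h x y' = h x y), v x y' * v x' y' ≤
          1 / 16 * ((Rs.filter fun y' => h x y' = h x y).card : ℝ)) ∧
      (∀ x ∈ Ls, ∀ y ∈ Rs, ∀ f : α → ℝ, (∀ z, |f z| ≤ 1) →
        N * ∑ x' ∈ Ls.filter (fun x' => l x' = l x),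
          (∑ y' ∈ Rs.filter (fun y' => h x y' = h x y), v x' y' * f y') ^ 2 ≤
        2 * ((Ls.filter fun x' => l x' = l x).card : ℝ) *
          ((Rs.filter fun y' => h x y' = h x y).card : ℝ) ^ 2) := by
  obtain ⟨d, b, hb, hd, hdr, hbal⟩ := exists_pairing Rs r r' hr ρ q hρ hrf hrc
  have hN' : (0 : ℝ) < N := by exact_mod_cast hN
  have hK' : (0 : ℝ) < K := by exact_mod_cast hK
  -- the classes are closed under the pairing
  have hcl : ∀ x ∈ Ls, ∀ y ∈ Rs, ∀ z ∈ Rs.filter (fun y' => h x y' = h x y), ∀ z' ∈ Rs,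
      d z' = d z → z' ∈ Rs.filter (fun y' => h x y' = h x y) := by
    intro x hx y hy z hz z' hz' hdz
    rw [Finset.mem_filter] at hz ⊢
    refine ⟨hz', ?_⟩
    rw [← hz.2]
    exact hconst x hx x hx z' hz' z hz.1 rfl (hdr _ _ hdz)
  have hDcard : ∀ x ∈ Ls, ∀ y ∈ Rs,
      ((Rs.filter (fun y' => h x y' = h x y)).image d).card = N := by
    intro x hx y hy
    have h1 := sum_closed (M := ℕ) Rs _ d (Finset.filter_subset _ _) (hcl x hx y hy) (fun _ => 1)
    have h2 : ∀ p ∈ (Rs.filter (fun y' => h x y' = h x y)).image d,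
        ∑ y ∈ Rs.filter (fun y => d y = p), 1 = 2 * ρ := by
      intro p hp
      obtain ⟨z, hz, rfl⟩ := Finset.mem_image.1 hp
      rw [← Finset.card_eq_sum_ones]
      exact (hbal z (Finset.mem_filter.1 hz).1).2
    rw [Finset.sum_congr rfl h2, ← Finset.card_eq_sum_ones, hclass x hx y hy, Finset.sum_const,
      smul_eq_mul, mul_comm] at h1
    exact (Nat.eq_of_mul_eq_mul_right (by positivity) h1).symm
  have hlcl : ∀ x ∈ Ls, ∀ z ∈ Ls.filter (fun x' => l x' = l x), ∀ z' ∈ Ls,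
      l' z' = l' z → z' ∈ Ls.filter (fun x' => l x' = l x) := by
    intro x hx z hz z' hz' hdz
    rw [Finset.mem_filter] at hz ⊢
    exact ⟨hz', (hl z' hz' z hz.1 hdz).trans hz.2⟩
  have hChcard : ∀ x ∈ Ls, ((Ls.filter (fun x' => l x' = l x)).image l').card = K := by
    intro x hx
    have h1 := sum_closed (M := ℕ) Ls _ l' (Finset.filter_subset _ _) (hlcl x hx) (fun _ => 1)
    have h2 : ∀ p ∈ (Ls.filter (fun x' => l x' = l x)).image l',
        ∑ y ∈ Ls.filter (fun y => l' y = p), 1 = lam := by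
      intro p hp
      obtain ⟨z, hz, rfl⟩ := Finset.mem_image.1 hp
      rw [← Finset.card_eq_sum_ones]
      exact hlf z (Finset.mem_filter.1 hz).1
    rw [Finset.sum_congr rfl h2, ← Finset.card_eq_sum_ones, hlc x hx, Finset.sum_const,
      smul_eq_mul, mul_comm] at h1
    exact (Nat.eq_of_mul_eq_mul_right hlam h1).symm
  -- the tests
  set SR : Finset (α × α × α) := (Ls ×ˢ Ls ×ˢ Rs).filter fun t => l' t.1 ≠ l' t.2.1 with hSR
  set SC : Finset (α × α × α) := (Ls ×ˢ Rs ×ˢ Rs).filter fun t => d t.2.1 ≠ d t.2.2 with hSC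
  set fR : α × α × α → Finset ((β × (β × ℕ)) × (β × (β × ℕ))) × ℝ := fun t =>
    (((Rs.filter (fun y' => h t.1 y' = h t.1 t.2.2)).image d).image
      (fun p => ((l' t.1, p), (l' t.2.1, p))), (N / 16 : ℝ)) with hfR
  set fC : α × α × α → Finset ((β × (β × ℕ)) × (β × (β × ℕ))) × ℝ := fun t =>
    (((Ls.filter (fun x' => l x' = l t.1)).image l').image
      (fun X => ((X, d t.2.1), (X, d t.2.2))), (K / N : ℝ)) with hfC
  have cR : (SR.image fR).card ≤ (Ls.image l').card ^ 2 * (Rs.image r').card := by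
    refine (card_image_le_of_factor SR fR (fun t => (l' t.1, l' t.2.1, r' t.2.2)) ?_).trans ?_
    · rintro ⟨x, x', y⟩ ht ⟨x2, x2', y2⟩ ht2 he
      simp only [hSR, Finset.mem_filter, Finset.mem_product] at ht ht2
      simp only [Prod.mk.injEq] at he
      obtain ⟨e1, e2, e3⟩ := he
      have hlx := hl x ht.1.1 x2 ht2.1.1 e1
      have hset : Rs.filter (fun y' => h x y' = h x y) =
          Rs.filter (fun y' => h x2 y' = h x2 y2) := by
        refine Finset.filter_congr fun z hz => ?_
        rw [hconst x ht.1.1 x2 ht2.1.1 z hz z hz hlx rfl,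
          hconst x ht.1.1 x2 ht2.1.1 y ht.1.2.2 y2 ht2.1.2.2 hlx
            (hr y ht.1.2.2 y2 ht2.1.2.2 e3)]
      simp only [hfR, e1, e2, hset]
    · have : SR.image (fun t => (l' t.1, l' t.2.1, r' t.2.2)) ⊆
          (Ls.image l') ×ˢ (Ls.image l') ×ˢ (Rs.image r') := by
        intro z hz
        obtain ⟨t, ht, rfl⟩ := Finset.mem_image.1 hz
        simp only [hSR, Finset.mem_filter, Finset.mem_product] at ht
        simp only [Finset.mem_product]
        exact ⟨Finset.mem_image_of_mem _ ht.1.1, Finset.mem_image_of_mem _ ht.1.2.1,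
          Finset.mem_image_of_mem _ ht.1.2.2⟩
      refine (Finset.card_le_card this).trans ?_
      rw [Finset.card_product, Finset.card_product]
      apply le_of_eq; ring
  have cC : (SC.image fC).card ≤ (Ls.image l).card * (Rs.image r').card ^ 2 := by
    refine (card_image_le_of_factor SC fC (fun t => (l t.1, r' t.2.1, r' t.2.2)) ?_).trans ?_
    · rintro ⟨x, y, y'⟩ ht ⟨x2, y2, y2'⟩ ht2 he
      simp only [hSC, Finset.mem_filter, Finset.mem_product] at ht ht2
      simp only [Prod.mk.injEq] at he
      obtain ⟨e1, e2, e3⟩ := he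
      have d1 := (hd y ht.1.2.1 y2 ht2.1.2.1 e2).1
      have d2 := (hd y' ht.1.2.2 y2' ht2.1.2.2 e3).1
      simp only [hfC, e1, d1, d2]
    · have : SC.image (fun t => (l t.1, r' t.2.1, r' t.2.2)) ⊆
          (Ls.image l) ×ˢ (Rs.image r') ×ˢ (Rs.image r') := by
        intro z hz
        obtain ⟨t, ht, rfl⟩ := Finset.mem_image.1 hz
        simp only [hSC, Finset.mem_filter, Finset.mem_product] at ht
        simp only [Finset.mem_product]
        exact ⟨Finset.mem_image_of_mem _ ht.1.1, Finset.mem_image_of_mem _ ht.1.2.1,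
          Finset.mem_image_of_mem _ ht.1.2.2⟩
      refine (Finset.card_le_card this).trans ?_
      rw [Finset.card_product, Finset.card_product]
      apply le_of_eq; ring
  obtain ⟨s, hs, hst⟩ := exists_signs ((Ls.image l') ×ˢ (Rs.image d))
    (SR.image fR ∪ SC.image fC) (Real.exp (-(N / 512 : ℝ)))
    (by
      intro w hw Q hQ
      rcases Finset.mem_union.1 hw with hw | hw
      · obtain ⟨t, ht, rfl⟩ := Finset.mem_image.1 hw
        simp only [hSR, Finset.mem_filter, Finset.mem_product] at ht
        simp only [hfR, Finset.mem_image] at hQ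
        obtain ⟨p, ⟨y, hy, rfl⟩, rfl⟩ := hQ
        exact Finset.mem_product.2 ⟨Finset.mem_image_of_mem _ ht.1.1,
          Finset.mem_image_of_mem _ (Finset.mem_filter.1 hy).1⟩
      · obtain ⟨t, ht, rfl⟩ := Finset.mem_image.1 hw
        simp only [hSC, Finset.mem_filter, Finset.mem_product] at ht
        simp only [hfC, Finset.mem_image] at hQ
        obtain ⟨p, ⟨x, hx, rfl⟩, rfl⟩ := hQ
        exact Finset.mem_product.2 ⟨Finset.mem_image_of_mem _ (Finset.mem_filter.1 hx).1,
          Finset.mem_image_of_mem _ ht.1.2.1⟩)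
    (by
      intro w hw Q hQ Q' hQ' hE
      rcases Finset.mem_union.1 hw with hw | hw
      · obtain ⟨t, ht, rfl⟩ := Finset.mem_image.1 hw
        obtain ⟨p, _, rfl⟩ := Finset.mem_image.1 hQ
        obtain ⟨p', _, rfl⟩ := Finset.mem_image.1 hQ'
        simp only [Prod.mk.injEq, true_and] at hE
        rw [hE]
      · obtain ⟨t, ht, rfl⟩ := Finset.mem_image.1 hw
        obtain ⟨p, _, rfl⟩ := Finset.mem_image.1 hQ
        obtain ⟨p', _, rfl⟩ := Finset.mem_image.1 hQ'
        simp only [Prod.mk.injEq, and_true] at hE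
        rw [hE])
    (by
      intro w hw Q hQ Q' hQ' hE
      rcases Finset.mem_union.1 hw with hw | hw
      · obtain ⟨t, ht, rfl⟩ := Finset.mem_image.1 hw
        simp only [hSR, Finset.mem_filter, Finset.mem_product] at ht
        obtain ⟨p, _, rfl⟩ := Finset.mem_image.1 hQ
        obtain ⟨p', _, rfl⟩ := Finset.mem_image.1 hQ'
        simp only [Prod.mk.injEq] at hE
        exact ht.2 hE.1
      · obtain ⟨t, ht, rfl⟩ := Finset.mem_image.1 hw
        simp only [hSC, Finset.mem_filter, Finset.mem_product] at ht
        obtain ⟨p, _, rfl⟩ := Finset.mem_image.1 hQ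
        obtain ⟨p', _, rfl⟩ := Finset.mem_image.1 hQ'
        simp only [Prod.mk.injEq] at hE
        exact ht.2 hE.2)
    (by
      intro w hw
      rcases Finset.mem_union.1 hw with hw | hw
      · obtain ⟨t, ht, rfl⟩ := Finset.mem_image.1 hw
        simp only [hSR, Finset.mem_filter, Finset.mem_product] at ht
        rw [Finset.card_image_of_injective, hDcard _ ht.1.1 _ ht.1.2.2]
        · exact hN
        · intro p p' hE
          simp only [Prod.mk.injEq, true_and] at hE
          exact hE.1
      · obtain ⟨t, ht, rfl⟩ := Finset.mem_image.1 hw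
        simp only [hSC, Finset.mem_filter, Finset.mem_product] at ht
        rw [Finset.card_image_of_injective, hChcard _ ht.1.1]
        · exact hK
        · intro p p' hE
          simp only [Prod.mk.injEq, and_true] at hE
          exact hE.1)
    (by
      intro w hw
      rcases Finset.mem_union.1 hw with hw | hw
      · obtain ⟨t, ht, rfl⟩ := Finset.mem_image.1 hw
        simp only [hSR, Finset.mem_filter, Finset.mem_product] at ht
        rw [Finset.card_image_of_injective, hDcard _ ht.1.1 _ ht.1.2.2]
        · refine ⟨by positivity, ?_⟩
          apply Real.exp_le_exp.2
          apply le_of_eq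
          have e : (fR t).2 = (N / 16 : ℝ) := rfl
          rw [e]
          field_simp; norm_num
        · intro p p' hE
          simp only [Prod.mk.injEq, true_and] at hE
          exact hE.1
      · obtain ⟨t, ht, rfl⟩ := Finset.mem_image.1 hw
        simp only [hSC, Finset.mem_filter, Finset.mem_product] at ht
        rw [Finset.card_image_of_injective, hChcard _ ht.1.1]
        · refine ⟨by positivity, ?_⟩
          apply Real.exp_le_exp.2
          rw [neg_le_neg_iff]
          have : ((K : ℝ) / N) ^ 2 / (2 * K) = K / (2 * N ^ 2) := by field_simp
          rw [this, div_le_div_iff₀ (by norm_num) (by positivity)]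
          nlinarith
        · intro p p' hE
          simp only [Prod.mk.injEq, and_true] at hE
          exact hE.1)
    (by
      refine lt_of_le_of_lt ?_ hnum
      gcongr
      have := (Finset.card_union_le (SR.image fR) (SC.image fC)).trans (Nat.add_le_add cR cC)
      exact_mod_cast this)
  have hrow : ∀ x ∈ Ls, ∀ x' ∈ Ls, l' x ≠ l' x' → ∀ y ∈ Rs,
      |∑ p ∈ (Rs.filter (fun y' => h x y' = h x y)).image d, s (l' x, p) * s (l' x', p)|
        ≤ N / 16 := by
    intro x hx x' hx' hne y hy
    have := hst (fR (x, x', y)) (Finset.mem_union_left _ (Finset.mem_image_of_mem _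
      (Finset.mem_filter.2 ⟨Finset.mem_product.2 ⟨hx, Finset.mem_product.2 ⟨hx', hy⟩⟩, hne⟩)))
    simp only [hfR] at this
    rw [Finset.sum_image] at this
    · exact this
    · intro p _ p' _ hE
      simp only [Prod.mk.injEq, true_and] at hE
      exact hE.1
  have hcol : ∀ x ∈ Ls, ∀ y ∈ Rs, ∀ y' ∈ Rs, d y ≠ d y' →
      |∑ X ∈ (Ls.filter (fun x' => l x' = l x)).image l', s (X, d y) * s (X, d y')|
        ≤ K / N := by
    intro x hx y hy y' hy' hne
    have := hst (fC (x, y, y')) (Finset.mem_union_right _ (Finset.mem_image_of_mem _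
      (Finset.mem_filter.2 ⟨Finset.mem_product.2 ⟨hx, Finset.mem_product.2 ⟨hy, hy'⟩⟩, hne⟩)))
    simp only [hfC] at this
    rw [Finset.sum_image] at this
    · exact this
    · intro p _ p' _ hE
      simp only [Prod.mk.injEq, and_true] at hE
      exact hE.1
  refine ⟨fun x y => b y * s (l' x, d y), ?_, ?_, ?_, ?_, ?_⟩
  · intro x y
    rcases hb y with h1 | h1 <;> rcases hs (l' x, d y) with h2 | h2 <;> simp [h1, h2]
  · intro x hx x' hx' y hy y' hy' e1 e2
    have := hd y hy y' hy' e2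
    simp only [e1, this.1, this.2]
  · intro x hx y hy
    beta_reduce
    rw [sum_closed Rs (Rs.filter fun y' => r y' = r y) d (Finset.filter_subset _ _)]
    · refine Finset.sum_eq_zero fun p hp => ?_
      obtain ⟨z, hz, rfl⟩ := Finset.mem_image.1 hp
      have e : ∀ y' ∈ Rs.filter (fun y' => d y' = d z), b y' * s (l' x, d y') =
          b y' * s (l' x, d z) := by
        intro y' hy'
        rw [(Finset.mem_filter.1 hy').2]
      rw [Finset.sum_congr rfl e, ← Finset.sum_mul, (hbal z (Finset.mem_filter.1 hz).1).1,
        zero_mul]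
    · intro z hz z' hz' hE
      rw [Finset.mem_filter] at hz ⊢
      exact ⟨hz', (hdr _ _ hE).trans hz.2⟩
  · intro x hx x' hx' hne y hy
    beta_reduce
    rw [sum_closed Rs (Rs.filter fun y' => h x y' = h x y) d (Finset.filter_subset _ _)
      (hcl x hx y hy)]
    have e : ∀ p ∈ (Rs.filter (fun y' => h x y' = h x y)).image d,
        ∑ y' ∈ Rs.filter (fun y' => d y' = p), b y' * s (l' x, d y') * (b y' * s (l' x', d y'))
        = 2 * ρ * (s (l' x, p) * s (l' x', p)) := by
      intro p hp
      obtain ⟨z, hz, rfl⟩ := Finset.mem_image.1 hp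
      have e : ∀ y' ∈ Rs.filter (fun y' => d y' = d z),
          b y' * s (l' x, d y') * (b y' * s (l' x', d y')) = s (l' x, d z) * s (l' x', d z) := by
        intro y' hy'
        rw [(Finset.mem_filter.1 hy').2]
        rcases hb y' with h1 | h1 <;> rw [h1] <;> ring
      rw [Finset.sum_congr rfl e, Finset.sum_const, (hbal z (Finset.mem_filter.1 hz).1).2,
        nsmul_eq_mul]
      push_cast; ring
    rw [Finset.sum_congr rfl e, ← Finset.mul_sum, hclass x hx y hy]
    have h1 := (le_abs_self _).trans (hrow x hx x' hx' hne y hy)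
    push_cast
    have h2 : (0 : ℝ) ≤ 2 * ρ := by positivity
    nlinarith [mul_le_mul_of_nonneg_left h1 h2]
  · intro x hx y hy f hf
    beta_reduce
    set Hc := Rs.filter (fun y' => h x y' = h x y) with hHc
    set D := Hc.image d with hDdef
    set g : β × ℕ → ℝ := fun p => ∑ y' ∈ Rs.filter (fun y' => d y' = p), b y' * f y' with hg
    have e1 : ∀ x' ∈ Ls.filter (fun x' => l x' = l x),
        (∑ y' ∈ Hc, b y' * s (l' x', d y') * f y') ^ 2 =
        (∑ p ∈ D, s (l' x', p) * g p) ^ 2 := by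
      intro x' _
      rw [sum_closed Rs Hc d (Finset.filter_subset _ _) (hcl x hx y hy)]
      congr 1
      refine Finset.sum_congr rfl fun p _ => ?_
      rw [hg, Finset.mul_sum]
      refine Finset.sum_congr rfl fun y' hy' => ?_
      rw [(Finset.mem_filter.1 hy').2]; ring
    rw [Finset.sum_congr rfl e1, sum_closed Ls (Ls.filter fun x' => l x' = l x) l'
      (Finset.filter_subset _ _) (hlcl x hx)]
    have e2 : ∀ X ∈ (Ls.filter fun x' => l x' = l x).image l',
        ∑ x' ∈ Ls.filter (fun x' => l' x' = X), (∑ p ∈ D, s (l' x', p) * g p) ^ 2 =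
        lam * (∑ p ∈ D, s (X, p) * g p) ^ 2 := by
      intro X hX
      obtain ⟨z, hz, rfl⟩ := Finset.mem_image.1 hX
      have e : ∀ x' ∈ Ls.filter (fun x' => l' x' = l' z),
          (∑ p ∈ D, s (l' x', p) * g p) ^ 2 = (∑ p ∈ D, s (l' z, p) * g p) ^ 2 := by
        intro x' hx'
        rw [(Finset.mem_filter.1 hx').2]
      rw [Finset.sum_congr rfl e, Finset.sum_const, hlf z (Finset.mem_filter.1 hz).1,
        nsmul_eq_mul]
    rw [Finset.sum_congr rfl e2, ← Finset.mul_sum, hlc x hx, hclass x hx y hy]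
    have hgb : ∀ p ∈ D, |g p| ≤ 2 * ρ := by
      intro p hp
      obtain ⟨z, hz, rfl⟩ := Finset.mem_image.1 hp
      have hz' := (hbal z (Finset.mem_filter.1 hz).1).2
      calc |g (d z)| ≤ ∑ y' ∈ Rs.filter (fun y' => d y' = d z), |b y' * f y'| :=
            Finset.abs_sum_le_sum_abs _ _
        _ ≤ ∑ y' ∈ Rs.filter (fun y' => d y' = d z), (1 : ℝ) := by
            refine Finset.sum_le_sum fun y' _ => ?_
            rw [abs_mul]
            rcases hb y' with h1 | h1 <;> rw [h1] <;> simpa using hf y'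
        _ = 2 * ρ := by rw [Finset.sum_const, hz']; simp
    have hfin := sq_sum_bound ((Ls.filter fun x' => l x' = l x).image l') D
      (fun X p => s (X, p)) g (2 * ρ) K N hK'.le hN' (by rw [hChcard x hx])
      (by rw [hDdef, hDcard x hx y hy]) (by positivity) hgb (fun X p => hs _)
      (by
        intro p hp p' hp' hne
        obtain ⟨z, hz, rfl⟩ := Finset.mem_image.1 hp
        obtain ⟨z', hz', rfl⟩ := Finset.mem_image.1 hp'
        exact hcol x hx z (Finset.mem_filter.1 hz).1 z' (Finset.mem_filter.1 hz').1 hne)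
    have h0 : (0 : ℝ) ≤ N * lam := by positivity
    have := mul_le_mul_of_nonneg_left hfin h0
    push_cast
    nlinarith

/-! ### The recursion -/

lemma half_card {α : Type*} (T : Finset α) (v : α → ℝ) (hv : ∀ y, v y = 1 ∨ v y = -1)
    (h0 : ∑ y ∈ T, v y = 0) (c : ℝ) (hc : c = 1 ∨ c = -1) :
    2 * (T.filter fun y => v y = c).card = T.card := by
  have h1 : ∑ y ∈ T, (1 + c * v y) = ∑ y ∈ T, (if v y = c then (2 : ℝ) else 0) := by
    refine Finset.sum_congr rfl fun y _ => ?_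
    rcases hv y with h | h <;> rcases hc with h' | h' <;> rw [h, h'] <;> norm_num
  rw [Finset.sum_add_distrib, ← Finset.mul_sum, h0, ← Finset.sum_filter, Finset.sum_const,
    Finset.sum_const, nsmul_eq_mul, nsmul_eq_mul] at h1
  have : (2 : ℝ) * ((T.filter fun y => v y = c).card : ℝ) = T.card := by linarith
  exact_mod_cast this

lemma sum_zero_of_closed {α β : Type*} [DecidableEq β] (Rs T : Finset α) (r : α → β) (hT : T ⊆ Rs)
    (hcl : ∀ y ∈ T, ∀ y' ∈ Rs, r y' = r y → y' ∈ T) (v : α → ℝ)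
    (hv : ∀ y ∈ Rs, ∑ y' ∈ Rs.filter (fun y' => r y' = r y), v y' = 0) :
    ∑ y ∈ T, v y = 0 := by
  rw [sum_closed Rs T r hT hcl]
  refine Finset.sum_eq_zero fun p hp => ?_
  obtain ⟨z, hz, rfl⟩ := Finset.mem_image.1 hp
  exact hv z (hT hz)

theorem recursion {α β : Type*} [DecidableEq β] (Ls Rs : Finset α) (s : ℕ) (l r : ℕ → α → β)
    (lam ρ K q N : ℕ → ℕ)
    (hl : ∀ k < s, ∀ x ∈ Ls, ∀ x' ∈ Ls, l (k + 1) x = l (k + 1) x' → l k x = l k x')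
    (hr : ∀ k < s, ∀ x ∈ Rs, ∀ x' ∈ Rs, r (k + 1) x = r (k + 1) x' → r k x = r k x')
    (hlf : ∀ k ≤ s, ∀ x ∈ Ls, (Ls.filter fun x' => l k x' = l k x).card = lam k)
    (hrf : ∀ k ≤ s, ∀ x ∈ Rs, (Rs.filter fun x' => r k x' = r k x).card = ρ k)
    (hlam : ∀ k ≤ s, 0 < lam k) (hρ : ∀ k ≤ s, 0 < ρ k)
    (hlK : ∀ k < s, lam k = lam (k + 1) * K k) (hrq : ∀ k < s, ρ k = ρ (k + 1) * (2 * q k))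
    (hK : ∀ k < s, 0 < K k) (hN : ∀ k < s, 0 < N k)
    (hsize : ∀ k < s, 2 ^ k * (2 * ρ (k + 1) * N k) = Rs.card)
    (hnum : ∀ k < s, (((Ls.image (l (k + 1))).card : ℝ) ^ 2 * (Rs.image (r (k + 1))).card +
      (Ls.image (l k)).card * ((Rs.image (r (k + 1))).card : ℝ) ^ 2) *
        (2 * Real.exp (-(N k / 512 : ℝ))) < 1)
    (hKN : ∀ k < s, (N k : ℝ) ^ 3 ≤ 256 * K k) :
    ∃ v : ℕ → α → α → ℝ, ∀ k < s, (∀ x y, v k x y = 1 ∨ v k x y = -1) ∧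
      (∀ x ∈ Ls, ∀ x' ∈ Ls, ∀ y ∈ Rs, ∀ y' ∈ Rs, l (k + 1) x = l (k + 1) x' →
        r (k + 1) y = r (k + 1) y' → v k x y = v k x' y') ∧
      (∀ x ∈ Ls, ∀ y ∈ Rs, ∑ y' ∈ Rs.filter (fun y' => r k y' = r k y), v k x y' = 0) ∧
      (∀ x ∈ Ls, ∀ x' ∈ Ls, l (k + 1) x ≠ l (k + 1) x' → ∀ y ∈ Rs,
        ∑ y' ∈ Rs.filter (fun y' => ∀ m < k, v m x y' = v m x y), v k x y' * v k x' y' ≤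
          1 / 16 * ((Rs.filter fun y' => ∀ m < k, v m x y' = v m x y).card : ℝ)) ∧
      (∀ x ∈ Ls, ∀ y ∈ Rs, ∀ f : α → ℝ, (∀ z, |f z| ≤ 1) →
        N k * ∑ x' ∈ Ls.filter (fun x' => l k x' = l k x),
          (∑ y' ∈ Rs.filter (fun y' => ∀ m < k, v m x y' = v m x y), v k x' y' * f y') ^ 2 ≤
        2 * ((Ls.filter fun x' => l k x' = l k x).card : ℝ) *
          ((Rs.filter fun y' => ∀ m < k, v m x y' = v m x y).card : ℝ) ^ 2) := by
  have step : ∀ (k : ℕ) (h : α → α → List ℝ), ∃ v : α → α → ℝ, k < s →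
      (∀ x ∈ Ls, ∀ x' ∈ Ls, ∀ y ∈ Rs, ∀ y' ∈ Rs, l k x = l k x' → r k y = r k y' →
        h x y = h x' y') →
      (∀ x ∈ Ls, ∀ y ∈ Rs, 2 ^ k * (Rs.filter fun y' => h x y' = h x y).card = Rs.card) →
      (∀ x y, v x y = 1 ∨ v x y = -1) ∧
      (∀ x ∈ Ls, ∀ x' ∈ Ls, ∀ y ∈ Rs, ∀ y' ∈ Rs, l (k + 1) x = l (k + 1) x' →
        r (k + 1) y = r (k + 1) y' → v x y = v x' y') ∧
      (∀ x ∈ Ls, ∀ y ∈ Rs, ∑ y' ∈ Rs.filter (fun y' => r k y' = r k y), v x y' = 0) ∧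
      (∀ x ∈ Ls, ∀ x' ∈ Ls, l (k + 1) x ≠ l (k + 1) x' → ∀ y ∈ Rs,
        ∑ y' ∈ Rs.filter (fun y' => h x y' = h x y), v x y' * v x' y' ≤
          1 / 16 * ((Rs.filter fun y' => h x y' = h x y).card : ℝ)) ∧
      (∀ x ∈ Ls, ∀ y ∈ Rs, ∀ f : α → ℝ, (∀ z, |f z| ≤ 1) →
        N k * ∑ x' ∈ Ls.filter (fun x' => l k x' = l k x),
          (∑ y' ∈ Rs.filter (fun y' => h x y' = h x y), v x' y' * f y') ^ 2 ≤
        2 * ((Ls.filter fun x' => l k x' = l k x).card : ℝ) *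
          ((Rs.filter fun y' => h x y' = h x y).card : ℝ) ^ 2) := by
    intro k h
    by_cases hc : k < s ∧
      (∀ x ∈ Ls, ∀ x' ∈ Ls, ∀ y ∈ Rs, ∀ y' ∈ Rs, l k x = l k x' → r k y = r k y' →
        h x y = h x' y') ∧
      (∀ x ∈ Ls, ∀ y ∈ Rs, 2 ^ k * (Rs.filter fun y' => h x y' = h x y).card = Rs.card)
    · obtain ⟨hk, hc1, hc2⟩ := hc
      obtain ⟨v, hv⟩ := step_construction Ls Rs (l k) (l (k + 1)) (r k) (r (k + 1)) h (hl k hk)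
        (hr k hk) (lam (k + 1)) (ρ (k + 1)) (q k) (K k) (N k) (hρ _ hk) (hlam _ hk) (hK k hk)
        (hN k hk) (hlf _ hk) (fun x hx => (hlf k hk.le x hx).trans (hlK k hk)) (hrf _ hk)
        (fun x hx => (hrf k hk.le x hx).trans (hrq k hk)) hc1
        (fun x hx y hy => Nat.eq_of_mul_eq_mul_left (Nat.two_pow_pos k)
          ((hc2 x hx y hy).trans (hsize k hk).symm)) (hnum k hk) (hKN k hk)
      exact ⟨v, fun _ _ _ => hv⟩
    · exact ⟨fun _ _ => 1, fun h1 h2 h3 => absurd ⟨h1, h2, h3⟩ hc⟩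
  choose E hE using step
  obtain ⟨H, H0, HS⟩ : ∃ H : ℕ → α → α → List ℝ, (H 0 = fun _ _ => []) ∧
      ∀ k, H (k + 1) = fun x y => E k (H k) x y :: H k x y :=
    ⟨fun n => Nat.rec (fun _ _ => []) (fun k h => fun x y => E k h x y :: h x y) n,
      rfl, fun k => rfl⟩
  have hiff : ∀ k x y x' y', H k x y = H k x' y' ↔ ∀ m < k, E m (H m) x y = E m (H m) x' y' := by
    intro k x y x' y'
    induction k with
    | zero => simp [H0]
    | succ k ih =>
      rw [HS]
      simp only [List.cons.injEq]
      rw [ih]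
      constructor
      · rintro ⟨h1, h2⟩ m hm
        rcases Nat.lt_succ_iff_lt_or_eq.1 hm with h | rfl
        · exact h2 m h
        · exact h1
      · intro h
        exact ⟨h k (Nat.lt_succ_self k), fun m hm => h m (hm.trans (Nat.lt_succ_self k))⟩
  have inv : ∀ k : ℕ, k ≤ s → (∀ x ∈ Ls, ∀ x' ∈ Ls, ∀ y ∈ Rs, ∀ y' ∈ Rs, l k x = l k x' →
      r k y = r k y' → H k x y = H k x' y') ∧
      (∀ x ∈ Ls, ∀ y ∈ Rs, 2 ^ k * (Rs.filter fun y' => H k x y' = H k x y).card = Rs.card) := by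
    intro k
    induction k with
    | zero =>
      intro _
      refine ⟨fun _ _ _ _ _ _ _ _ _ _ => by rw [H0], fun x hx y hy => by simp [H0]⟩
    | succ k ih =>
      intro hk
      have hk' : k < s := hk
      obtain ⟨i1, i2⟩ := ih hk'.le
      obtain ⟨v0, v1, v2, -, -⟩ := hE k (H k) hk' i1 i2
      refine ⟨?_, ?_⟩
      · intro x hx x' hx' y hy y' hy' e1 e2
        rw [HS]
        simp only [List.cons.injEq]
        exact ⟨v1 x hx x' hx' y hy y' hy' e1 e2, i1 x hx x' hx' y hy y' hy'
          (hl k hk' x hx x' hx' e1) (hr k hk' y hy y' hy' e2)⟩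
      · intro x hx y hy
        have hz := sum_zero_of_closed Rs (Rs.filter fun y' : α => H k x y' = H k x y) (r k)
          (Finset.filter_subset _ _) (by
            intro z hz z' hz' e
            rw [Finset.mem_filter] at hz ⊢
            exact ⟨hz', (i1 x hx x hx z' hz' z hz.1 rfl e).trans hz.2⟩) (E k (H k) x)
          (v2 x hx)
        have hh := half_card _ (E k (H k) x) (v0 x) hz (E k (H k) x y) (v0 x y)
        have e : Rs.filter (fun y' => H (k + 1) x y' = H (k + 1) x y) =
            (Rs.filter fun y' => H k x y' = H k x y).filter
              fun y' => E k (H k) x y' = E k (H k) x y := by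
          rw [Finset.filter_filter]
          refine Finset.filter_congr fun z _ => ?_
          rw [HS]
          simp only [List.cons.injEq]
          exact and_comm
        rw [e, ← i2 x hx y hy, ← hh]
        ring
  refine ⟨fun k => E k (H k), fun k hk => ?_⟩
  have key := hE k (H k) hk (inv k hk.le).1 (inv k hk.le).2
  simp only [hiff] at key
  exact key

/-! ### Numerics -/

lemma two_rpow_eq (u : ℝ) : (2 : ℝ) ^ u = Real.exp (Real.log 2 * u) :=
  Real.rpow_def_of_pos two_pos u

lemma numerics_test (N Rc Lc Lc' : ℝ) (hN : 2 ^ 199 ≤ N) (hR0 : 0 ≤ Rc) (hL0 : 0 ≤ Lc)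
    (hL0' : 0 ≤ Lc') (hR : Rc ≤ 2 * N ^ 2)
    (hL' : Lc' ≤ (2 : ℝ) ^ (N / 1024)) (hL : Lc ≤ (2 : ℝ) ^ (N / 2048)) :
    (Lc' ^ 2 * Rc + Lc * Rc ^ 2) * (2 * Real.exp (-(N / 512))) < 1 := by
  obtain ⟨u, hu⟩ : ∃ u : ℝ, u = N / 2048 := ⟨_, rfl⟩
  have hNu : N = 2048 * u := by rw [hu]; ring
  have hu1 : (2 : ℝ) ^ 188 ≤ u := by rw [hu, le_div_iff₀ (by norm_num)]; refine le_trans ?_ hN; norm_num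
  have hu0 : 0 < u := lt_of_lt_of_le (by positivity) hu1
  have hlog := Real.log_two_lt_d9
  have hlog0 := Real.log_two_gt_d9
  have h1 : Lc' ^ 2 * Real.exp (-(N / 512)) ≤ Real.exp (-u) := by
    calc Lc' ^ 2 * Real.exp (-(N / 512)) ≤ ((2 : ℝ) ^ (N / 1024)) ^ 2 * Real.exp (-(N / 512)) := by
          gcongr
      _ = Real.exp (Real.log 2 * (2 * u) + Real.log 2 * (2 * u) + -(4 * u)) := by
          rw [two_rpow_eq, Real.exp_add, Real.exp_add, sq, hNu]
          congr 2 <;> ring_nf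
      _ ≤ Real.exp (-u) := by
          apply Real.exp_le_exp.2; nlinarith
  have h2 : Lc * Real.exp (-(N / 512)) ≤ Real.exp (-u) := by
    calc Lc * Real.exp (-(N / 512)) ≤ ((2 : ℝ) ^ (N / 2048)) * Real.exp (-(N / 512)) := by
          gcongr
      _ = Real.exp (Real.log 2 * u + -(4 * u)) := by
          rw [two_rpow_eq, Real.exp_add, hNu]
          congr 2 <;> ring_nf
      _ ≤ Real.exp (-u) := by
          apply Real.exp_le_exp.2; nlinarith
  have h3 : u ^ 5 / 120 ≤ Real.exp u := by
    have := Real.pow_div_factorial_le_exp u hu0.le 5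
    simpa [Nat.factorial] using this
  have he : Real.exp (-u) * u ^ 5 ≤ 120 := by
    rw [Real.exp_neg, inv_mul_le_iff₀ (Real.exp_pos u)]
    linarith
  have hN1 : 1 ≤ N := le_trans (by norm_num) hN
  have hRsq : Rc ^ 2 ≤ 4 * N ^ 4 := by
    calc Rc ^ 2 ≤ (2 * N ^ 2) ^ 2 := by gcongr
      _ = _ := by ring
  have hN24 : N ^ 2 ≤ N ^ 4 := pow_le_pow_right₀ hN1 (by norm_num)
  have he0 := (Real.exp_pos (-u)).le
  have hR1 : Rc ≤ 2 * N ^ 4 := by linarith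
  have a1 : Lc' ^ 2 * Real.exp (-(N / 512)) * Rc ≤ Real.exp (-u) * (2 * N ^ 4) :=
    mul_le_mul h1 hR1 hR0 he0
  have a2 : Lc * Real.exp (-(N / 512)) * Rc ^ 2 ≤ Real.exp (-u) * (4 * N ^ 4) :=
    mul_le_mul h2 hRsq (by positivity) he0
  have a3 : (Lc' ^ 2 * Rc + Lc * Rc ^ 2) * (2 * Real.exp (-(N / 512))) ≤
      12 * (Real.exp (-u) * N ^ 4) := by nlinarith
  refine lt_of_le_of_lt a3 ?_
  have a4 : 12 * (Real.exp (-u) * N ^ 4) * u = 12 * 2048 ^ 4 * (Real.exp (-u) * u ^ 5) := by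
    rw [hNu]; ring
  by_contra hcon
  push Not at hcon
  have : u ≤ 12 * 2048 ^ 4 * 120 := by nlinarith
  have : (2 : ℝ) ^ 188 ≤ 12 * 2048 ^ 4 * 120 := hu1.trans this
  norm_num at this

lemma numerics_K (N K : ℝ) (hN : 2 ^ 199 ≤ N) (hK : (2 : ℝ) ^ (N / 2048) ≤ K) :
    N ^ 3 ≤ 256 * K := by
  obtain ⟨u, hu⟩ : ∃ u : ℝ, u = N / 2048 := ⟨_, rfl⟩
  have hNu : N = 2048 * u := by rw [hu]; ring
  have hu1 : (2 : ℝ) ^ 188 ≤ u := by rw [hu, le_div_iff₀ (by norm_num)]; refine le_trans ?_ hN; norm_num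
  have hu0 : 0 < u := lt_of_lt_of_le (by positivity) hu1
  have hlog0 := Real.log_two_gt_d9
  have h1 : Real.exp (u / 2) ≤ K := by
    refine le_trans ?_ hK
    rw [two_rpow_eq, ← hu]
    apply Real.exp_le_exp.2; nlinarith
  have h3 : (u / 2) ^ 4 / 24 ≤ Real.exp (u / 2) := by
    have := Real.pow_div_factorial_le_exp (u / 2) (by positivity) 4
    simpa [Nat.factorial] using this
  have h4 : (2 : ℝ) ^ 188 * u ^ 3 ≤ u ^ 4 := by
    have : (0 : ℝ) < u ^ 3 := by positivity
    nlinarith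
  rw [hNu]
  have h5 : (0 : ℝ) ≤ u ^ 3 := by positivity
  have h6 : (u / 2) ^ 4 / 24 = u ^ 4 / 384 := by ring
  rw [h6] at h3
  have h7 : (2048 * u) ^ 3 = 2048 ^ 3 * u ^ 3 := by ring
  rw [h7]
  have h8 : (2048 : ℝ) ^ 3 * u ^ 3 ≤ 256 * ((2 : ℝ) ^ 188 * u ^ 3 / 384) := by
    have : (2048 : ℝ) ^ 3 ≤ 256 * (2 ^ 188 / 384) := by norm_num
    nlinarith
  linarith

/-! ### Partitions as functions -/

/-- The part of `P` containing `x`. -/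
def partOf {α : Type*} (P : Finset (Finset α)) (x : α) : Finset α :=
  if h : ∃ p, p ∈ P ∧ x ∈ p then h.choose else ∅

lemma partOf_spec {α : Type*} {P : Finset (Finset α)} {S : Finset α} (hP : IsPartition P S)
    {x : α} (hx : x ∈ S) : partOf P x ∈ P ∧ x ∈ partOf P x := by
  have h : ∃ p, p ∈ P ∧ x ∈ p := (hP.2.2 x hx).exists
  rw [partOf, dif_pos h]
  exact h.choose_spec

lemma partOf_eq {α : Type*} {P : Finset (Finset α)} {S : Finset α} (hP : IsPartition P S)
    {x : α} {p : Finset α} (hp : p ∈ P) (hx : x ∈ p) : partOf P x = p := by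
  have hxS := hP.2.1 p hp hx
  exact (hP.2.2 x hxS).unique (partOf_spec hP hxS) ⟨hp, hx⟩

lemma partOf_filter {α : Type*} [DecidableEq α] {P : Finset (Finset α)} {S : Finset α}
    (hP : IsPartition P S) {p : Finset α} (hp : p ∈ P) :
    S.filter (fun x' => partOf P x' = p) = p := by
  ext x
  rw [Finset.mem_filter]
  constructor
  · rintro ⟨h1, h2⟩
    rw [← h2]; exact (partOf_spec hP h1).2
  · intro h
    exact ⟨hP.2.1 p hp h, partOf_eq hP hp h⟩

lemma partOf_image {α : Type*} [DecidableEq α] {P : Finset (Finset α)} {S : Finset α}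
    (hP : IsPartition P S) : S.image (partOf P) = P := by
  ext p
  rw [Finset.mem_image]
  constructor
  · rintro ⟨x, hx, rfl⟩; exact (partOf_spec hP hx).1
  · intro hp
    obtain ⟨x, hx⟩ := hP.1 p hp
    exact ⟨x, hP.2.1 p hp hx, partOf_eq hP hp hx⟩

lemma sum_parts {α M : Type*} [DecidableEq α] [AddCommMonoid M] {P : Finset (Finset α)}
    {S : Finset α} (hP : IsPartition P S) (F : α → M) :
    ∑ x ∈ S, F x = ∑ p ∈ P, ∑ x ∈ p, F x := by
  rw [sum_closed S S (partOf P) (Finset.Subset.refl _) (fun _ _ y' hy' _ => hy') F,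
    partOf_image hP]
  exact Finset.sum_congr rfl fun p hp => by rw [partOf_filter hP hp]

lemma equi_card {α : Type*} [DecidableEq α] {P : Finset (Finset α)} {S : Finset α}
    (hP : IsPartition P S) (hE : EquitableParts P) {p : Finset α} (hp : p ∈ P) :
    p.card * P.card = S.card := by
  have h := sum_parts hP (fun _ => (1 : ℕ))
  rw [← Finset.card_eq_sum_ones] at h
  rw [h]
  have : ∀ p' ∈ P, ∑ x ∈ p', 1 = p.card := by
    intro p' hp'
    rw [← Finset.card_eq_sum_ones]
    exact hE p' hp' p hp
  rw [Finset.sum_congr rfl this, Finset.sum_const, smul_eq_mul, mul_comm]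

lemma partOf_refines {α : Type*} {P P' : Finset (Finset α)} {S : Finset α}
    (hP : IsPartition P S) (hP' : IsPartition P' S) (hr : Refines P' P) {x x' : α} (hx : x ∈ S)
    (hx' : x' ∈ S) (h : partOf P' x = partOf P' x') : partOf P x = partOf P x' := by
  obtain ⟨p, hp, hsub⟩ := hr _ (partOf_spec hP' hx).1
  rw [partOf_eq hP hp (hsub (partOf_spec hP' hx).2),
    partOf_eq hP hp (hsub (h ▸ (partOf_spec hP' hx').2))]

theorem signs_exist {α : Type*} [DecidableEq α] (s : ℕ) (Ls Rs : Finset α)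
    (L R : ℕ → Finset (Finset α))
    (hLpart : ∀ i, i ≤ s → IsPartition (L i) Ls)
    (hRpart : ∀ i, i ≤ s → IsPartition (R i) Rs)
    (hLequi : ∀ i, i ≤ s → EquitableParts (L i))
    (hRequi : ∀ i, i ≤ s → EquitableParts (R i))
    (hLref : ∀ i, i < s → Refines (L (i + 1)) (L i))
    (hRref : ∀ i, i < s → Refines (R (i + 1)) (R i))
    (hL0 : (L 0).card = 1) (hR0 : (R 0).card = 1) (hLne : Ls.Nonempty) (hRne : Rs.Nonempty)
    (a : ℕ → ℕ) (ha : ∀ i, 1 ≤ i → i ≤ s → (R i).card = 2 ^ a i)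
    (ha1 : 200 ≤ a 1) (hgrow : ∀ i, 1 ≤ i → i < s → a i + 2 ≤ a (i + 1))
    (hLcard : ∀ i, 1 ≤ i → i ≤ s →
      ((L i).card : ℝ) = (2 : ℝ) ^ (((R i).card : ℝ) / (2 : ℝ) ^ (i + 10))) :
    ∃ v : ℕ → α → α → ℝ, ∀ k < s, (∀ x y, v k x y = 1 ∨ v k x y = -1) ∧
      (∀ x ∈ Ls, ∀ x' ∈ Ls, ∀ y ∈ Rs, ∀ y' ∈ Rs,
        partOf (L (k + 1)) x = partOf (L (k + 1)) x' →
        partOf (R (k + 1)) y = partOf (R (k + 1)) y' → v k x y = v k x' y') ∧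
      (∀ x ∈ Ls, ∀ y ∈ Rs,
        ∑ y' ∈ Rs.filter (fun y' => partOf (R k) y' = partOf (R k) y), v k x y' = 0) ∧
      (∀ x ∈ Ls, ∀ x' ∈ Ls, partOf (L (k + 1)) x ≠ partOf (L (k + 1)) x' → ∀ y ∈ Rs,
        ∑ y' ∈ Rs.filter (fun y' => ∀ m < k, v m x y' = v m x y), v k x y' * v k x' y' ≤
          1 / 16 * ((Rs.filter fun y' => ∀ m < k, v m x y' = v m x y).card : ℝ)) ∧
      (∀ x ∈ Ls, ∀ y ∈ Rs, ∀ f : α → ℝ, (∀ z, |f z| ≤ 1) →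
        (2 ^ k * 2 ^ a 1) *
        ∑ x' ∈ Ls.filter (fun x' => partOf (L k) x' = partOf (L k) x),
          (∑ y' ∈ Rs.filter (fun y' => ∀ m < k, v m x y' = v m x y), v k x' y' * f y') ^ 2 ≤
        4 * ((Ls.filter fun x' => partOf (L k) x' = partOf (L k) x).card : ℝ) *
          ((Rs.filter fun y' => ∀ m < k, v m x y' = v m x y).card : ℝ) ^ 2) := by
  have ha' : ∀ k < s, a 1 + 2 * k ≤ a (k + 1) := by
    intro k
    induction k with
    | zero => intro _; simp
    | succ k ih =>
      intro hk
      have h1 := ih (by omega)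
      have h2 := hgrow (k + 1) (by omega) hk
      omega
  obtain ⟨a', ha'0, ha'S⟩ : ∃ a' : ℕ → ℕ, a' 0 = 0 ∧ ∀ k, a' (k + 1) = a (k + 1) :=
    ⟨fun k => if k = 0 then 0 else a k, by simp, fun k => by simp⟩
  obtain ⟨e, he0, heS⟩ : ∃ e : ℕ → ℕ, e 0 = 0 ∧ ∀ k, e (k + 1) = 2 ^ (a (k + 1) - k - 11) :=
    ⟨fun k => if k = 0 then 0 else 2 ^ (a k - (k - 1) - 11), by simp, fun k => by simp⟩
  have hRc : ∀ k ≤ s, (R k).card = 2 ^ a' k := by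
    intro k hk
    rcases k with _ | k
    · rw [hR0, ha'0, pow_zero]
    · rw [ha'S]; exact ha _ (by omega) hk
  have hLc : ∀ k ≤ s, (L k).card = 2 ^ e k := by
    intro k hk
    rcases k with _ | k
    · rw [hL0, he0, pow_zero]
    · have h1 := hLcard (k + 1) (by omega) hk
      have h2 := ha (k + 1) (by omega) hk
      have h3 := ha' k hk
      have h4 : ((R (k + 1)).card : ℝ) / (2 : ℝ) ^ (k + 1 + 10) = ((e (k + 1) : ℕ) : ℝ) := by
        rw [h2, heS]
        push_cast
        rw [div_eq_iff (by positivity), ← pow_add]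
        congr 1
        omega
      rw [h4, Real.rpow_natCast] at h1
      exact_mod_cast h1
  have haa : ∀ k < s, a' k + 1 ≤ a' (k + 1) := by
    intro k hk
    rw [ha'S]
    rcases k with _ | k
    · rw [ha'0]; show 0 + 1 ≤ a 1; omega
    · rw [ha'S]; have := hgrow (k + 1) (by omega) hk; omega
  have hee : ∀ k < s, 2 * e k ≤ e (k + 1) := by
    intro k hk
    rw [heS]
    rcases k with _ | k
    · rw [he0]; simp
    · rw [heS, ← pow_succ']
      have := hgrow (k + 1) (by omega) hk
      have h3 := ha' k (by omega)
      exact Nat.pow_le_pow_right (by norm_num) (by omega)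
  obtain ⟨x0, hx0⟩ := hLne
  obtain ⟨y0, hy0⟩ := hRne
  have hlm : ∀ k ≤ s, (partOf (L k) x0).card * 2 ^ e k = Ls.card := fun k hk => by
    rw [← hLc k hk]
    exact equi_card (hLpart k hk) (hLequi k hk) (partOf_spec (hLpart k hk) hx0).1
  have hrm : ∀ k ≤ s, (partOf (R k) y0).card * 2 ^ a' k = Rs.card := fun k hk => by
    rw [← hRc k hk]
    exact equi_card (hRpart k hk) (hRequi k hk) (partOf_spec (hRpart k hk) hy0).1
  have hN : ∀ k < s, (2 : ℝ) ^ 199 ≤ ((2 ^ (a (k + 1) - k - 1) : ℕ) : ℝ) := by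
    intro k hk
    have := ha' k hk
    push_cast
    exact pow_le_pow_right₀ (by norm_num) (by omega)
  have hNe : ∀ k < s, 2 ^ (a (k + 1) - k - 1) = 1024 * e (k + 1) := by
    intro k hk
    have := ha' k hk
    rw [heS, show (1024 : ℕ) = 2 ^ 10 by norm_num, ← pow_add]
    congr 1
    omega
  obtain ⟨v, hv⟩ := recursion Ls Rs s (fun k => partOf (L k)) (fun k => partOf (R k))
    (fun k => (partOf (L k) x0).card) (fun k => (partOf (R k) y0).card)
    (fun k => 2 ^ (e (k + 1) - e k)) (fun k => 2 ^ (a' (k + 1) - a' k - 1))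
    (fun k => 2 ^ (a (k + 1) - k - 1))
    (fun k hk x hx x' hx' h => partOf_refines (hLpart k hk.le) (hLpart _ hk) (hLref k hk) hx hx' h)
    (fun k hk x hx x' hx' h => partOf_refines (hRpart k hk.le) (hRpart _ hk) (hRref k hk) hx hx' h)
    (fun k hk x hx => by
      beta_reduce
      rw [partOf_filter (hLpart k hk) (partOf_spec (hLpart k hk) hx).1]
      exact hLequi k hk _ (partOf_spec (hLpart k hk) hx).1 _ (partOf_spec (hLpart k hk) hx0).1)
    (fun k hk x hx => by
      beta_reduce
      rw [partOf_filter (hRpart k hk) (partOf_spec (hRpart k hk) hx).1]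
      exact hRequi k hk _ (partOf_spec (hRpart k hk) hx).1 _ (partOf_spec (hRpart k hk) hy0).1)
    (fun k hk => Finset.card_pos.2 ⟨x0, (partOf_spec (hLpart k hk) hx0).2⟩)
    (fun k hk => Finset.card_pos.2 ⟨y0, (partOf_spec (hRpart k hk) hy0).2⟩)
    (fun k hk => by
      beta_reduce
      have h1 := hlm k hk.le
      rw [← hlm (k + 1) hk] at h1
      have h2 := hee k hk
      refine Nat.eq_of_mul_eq_mul_right (Nat.two_pow_pos (e k)) ?_
      rw [h1, mul_assoc, ← pow_add]
      congr 2
      omega)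
    (fun k hk => by
      beta_reduce
      have h1 := hrm k hk.le
      rw [← hrm (k + 1) hk] at h1
      have h2 := haa k hk
      refine Nat.eq_of_mul_eq_mul_right (Nat.two_pow_pos (a' k)) ?_
      rw [h1, mul_assoc, ← pow_succ', ← pow_add]
      congr 2
      omega)
    (fun k hk => by positivity)
    (fun k hk => by positivity)
    (fun k hk => by
      beta_reduce
      have h1 := hrm (k + 1) hk
      rw [← h1, ha'S]
      have h2 := ha' k hk
      have h3 : (2 : ℕ) ^ a (k + 1) = 2 ^ k * 2 * 2 ^ (a (k + 1) - k - 1) := by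
        rw [← pow_succ, ← pow_add]; congr 1; omega
      rw [h3]; ring)
    (fun k hk => by
      beta_reduce
      rw [partOf_image (hLpart _ hk), partOf_image (hLpart _ hk.le), partOf_image (hRpart _ hk)]
      apply numerics_test _ _ _ _ (hN k hk) (by positivity) (by positivity) (by positivity)
      · rw [hRc _ hk, ha'S]
        have h2 := ha' k hk
        push_cast
        rw [← pow_mul, ← pow_succ']
        exact pow_le_pow_right₀ (by norm_num) (by omega)
      · rw [hLc _ hk, hNe k hk]
        push_cast
        rw [mul_div_cancel_left₀ _ (by norm_num), Real.rpow_natCast]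
      · rw [hLc _ hk.le, hNe k hk]
        push_cast
        rw [← Real.rpow_natCast]
        apply Real.rpow_le_rpow_of_exponent_le (by norm_num)
        rw [le_div_iff₀ (by norm_num)]
        have : (2 : ℝ) * e k ≤ e (k + 1) := by exact_mod_cast hee k hk
        linarith)
    (fun k hk => by
      beta_reduce
      apply numerics_K _ _ (hN k hk)
      rw [hNe k hk]
      push_cast
      rw [← Real.rpow_natCast]
      apply Real.rpow_le_rpow_of_exponent_le (by norm_num)
      have h1 := hee k hk
      rw [Nat.cast_sub (by omega)]
      have : (2 : ℝ) * e k ≤ e (k + 1) := by exact_mod_cast h1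
      rw [div_le_iff₀ (by norm_num)]
      linarith)
  refine ⟨v, fun k hk => ?_⟩
  obtain ⟨v0, v1, v2, v3, v4⟩ := hv k hk
  refine ⟨v0, v1, v2, v3, ?_⟩
  intro x hx y hy f hf
  have h := v4 x hx y hy f hf
  have hNN : (2 : ℝ) ^ k * 2 ^ a 1 ≤ 2 * ((2 ^ (a (k + 1) - k - 1) : ℕ) : ℝ) := by
    push_cast
    rw [← pow_add, ← pow_succ']
    have h2 := ha' k hk
    exact pow_le_pow_right₀ (by norm_num) (by omega)
  refine (mul_le_mul_of_nonneg_right hNN (Finset.sum_nonneg fun _ _ => sq_nonneg _)).trans ?_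
  beta_reduce at h
  linarith

/-! ### Neighbourhoods -/

/-- The properties of the sign system that are used below. -/
structure SignSys {α β : Type*} [DecidableEq β] (s : ℕ) (Ls Rs : Finset α) (l r : ℕ → α → β)
    (M : ℝ) (v : ℕ → α → α → ℝ) : Prop where
  pm : ∀ k < s, ∀ x y, v k x y = 1 ∨ v k x y = -1
  const : ∀ k < s, ∀ x ∈ Ls, ∀ x' ∈ Ls, ∀ y ∈ Rs, ∀ y' ∈ Rs, l (k + 1) x = l (k + 1) x' →
        r (k + 1) y = r (k + 1) y' → v k x y = v k x' y'
  bal : ∀ k < s, ∀ x ∈ Ls, ∀ y ∈ Rs,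
        ∑ y' ∈ Rs.filter (fun y' => r k y' = r k y), v k x y' = 0
  sep : ∀ k < s, ∀ x ∈ Ls, ∀ x' ∈ Ls, l (k + 1) x ≠ l (k + 1) x' → ∀ y ∈ Rs,
        ∑ y' ∈ Rs.filter (fun y' => ∀ m < k, v m x y' = v m x y), v k x y' * v k x' y' ≤
          1 / 16 * ((Rs.filter fun y' => ∀ m < k, v m x y' = v m x y).card : ℝ)
  mom : ∀ k < s, ∀ x ∈ Ls, ∀ y ∈ Rs, ∀ f : α → ℝ, (∀ z, |f z| ≤ 1) →
        (2 ^ k * M) *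
        ∑ x' ∈ Ls.filter (fun x' => l k x' = l k x),
          (∑ y' ∈ Rs.filter (fun y' => ∀ m < k, v m x y' = v m x y), v k x' y' * f y') ^ 2 ≤
        4 * ((Ls.filter fun x' => l k x' = l k x).card : ℝ) *
          ((Rs.filter fun y' => ∀ m < k, v m x y' = v m x y).card : ℝ) ^ 2
  lref : ∀ k < s, ∀ x ∈ Ls, ∀ x' ∈ Ls, l (k + 1) x = l (k + 1) x' → l k x = l k x'
  rref : ∀ k < s, ∀ x ∈ Rs, ∀ x' ∈ Rs, r (k + 1) x = r (k + 1) x' → r k x = r k x'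
  l0 : ∀ x ∈ Ls, ∀ z ∈ Ls, l 0 x = l 0 z

/-- The neighbourhood of `x` in the graph of level `k` given by the sign pattern `t`. -/
def nb {α : Type*} (Rs : Finset α) (v : ℕ → α → α → ℝ) (t : ℕ → ℝ) (k : ℕ) (x : α) : Finset α :=
  Rs.filter fun y => ∀ m < k, v m x y = t m

lemma mem_nb {α : Type*} {Rs : Finset α} {v : ℕ → α → α → ℝ} {t : ℕ → ℝ} {k : ℕ} {x y : α} :
    y ∈ nb Rs v t k x ↔ y ∈ Rs ∧ ∀ m < k, v m x y = t m := by
  rw [nb, Finset.mem_filter]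

lemma nb_zero {α : Type*} (Rs : Finset α) (v : ℕ → α → α → ℝ) (t : ℕ → ℝ) (x : α) :
    nb Rs v t 0 x = Rs := by
  ext y; simp [mem_nb]

lemma nb_succ {α : Type*} (Rs : Finset α) (v : ℕ → α → α → ℝ) (t : ℕ → ℝ) (k : ℕ) (x : α) :
    nb Rs v t (k + 1) x = (nb Rs v t k x).filter fun y => v k x y = t k := by
  ext y
  simp only [mem_nb, Finset.mem_filter, Nat.lt_succ_iff_lt_or_eq]
  constructor
  · rintro ⟨h1, h2⟩
    exact ⟨⟨h1, fun m hm => h2 m (Or.inl hm)⟩, h2 k (Or.inr rfl)⟩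
  · rintro ⟨⟨h1, h2⟩, h3⟩
    refine ⟨h1, fun m hm => ?_⟩
    rcases hm with h | rfl
    · exact h2 m h
    · exact h3

lemma nb_anti {α : Type*} (Rs : Finset α) (v : ℕ → α → α → ℝ) (t : ℕ → ℝ) {k j : ℕ} (h : k ≤ j)
    (x : α) : nb Rs v t j x ⊆ nb Rs v t k x := by
  intro y hy
  rw [mem_nb] at hy ⊢
  exact ⟨hy.1, fun m hm => hy.2 m (hm.trans_le h)⟩

namespace SignSys

variable {α β : Type*} [DecidableEq β] {s : ℕ} {Ls Rs : Finset α} {l r : ℕ → α → β}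
    {M : ℝ} {v : ℕ → α → α → ℝ}

lemma lref' (hS : SignSys s Ls Rs l r M v) {x x' : α} (hx : x ∈ Ls) (hx' : x' ∈ Ls) (k d : ℕ)
    (hd : k + d ≤ s) (h : l (k + d) x = l (k + d) x') : l k x = l k x' := by
  induction d with
  | zero => exact h
  | succ d ih =>
    exact ih (by omega) (hS.lref (k + d) (by omega) x hx x' hx' h)

lemma rref' (hS : SignSys s Ls Rs l r M v) {x x' : α} (hx : x ∈ Rs) (hx' : x' ∈ Rs) (k d : ℕ)
    (hd : k + d ≤ s) (h : r (k + d) x = r (k + d) x') : r k x = r k x' := by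
  induction d with
  | zero => exact h
  | succ d ih =>
    exact ih (by omega) (hS.rref (k + d) (by omega) x hx x' hx' h)

lemma lref_le (hS : SignSys s Ls Rs l r M v) {x x' : α} (hx : x ∈ Ls) (hx' : x' ∈ Ls) {k j : ℕ}
    (hkj : k ≤ j) (hj : j ≤ s) (h : l j x = l j x') : l k x = l k x' := by
  obtain ⟨d, rfl⟩ := Nat.exists_eq_add_of_le hkj
  exact hS.lref' hx hx' k d hj h

lemma rref_le (hS : SignSys s Ls Rs l r M v) {x x' : α} (hx : x ∈ Rs) (hx' : x' ∈ Rs) {k j : ℕ}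
    (hkj : k ≤ j) (hj : j ≤ s) (h : r j x = r j x') : r k x = r k x' := by
  obtain ⟨d, rfl⟩ := Nat.exists_eq_add_of_le hkj
  exact hS.rref' hx hx' k d hj h

lemma const_le (hS : SignSys s Ls Rs l r M v) {x x' y y' : α} (hx : x ∈ Ls) (hx' : x' ∈ Ls)
    (hy : y ∈ Rs) (hy' : y' ∈ Rs) {m k : ℕ} (hmk : m < k) (hk : k ≤ s) (hl : l k x = l k x')
    (hr : r k y = r k y') : v m x y = v m x' y' :=
  hS.const m (by omega) x hx x' hx' y hy y' hy' (hS.lref_le hx hx' hmk hk hl)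
    (hS.rref_le hy hy' hmk hk hr)

lemma nb_closed (hS : SignSys s Ls Rs l r M v) (t : ℕ → ℝ) {x y y' : α} (hx : x ∈ Ls) {k : ℕ}
    (hk : k ≤ s) (hy : y ∈ nb Rs v t k x) (hy' : y' ∈ Rs) (h : r k y' = r k y) :
    y' ∈ nb Rs v t k x := by
  rw [mem_nb] at hy ⊢
  exact ⟨hy', fun m hm => (hS.const_le hx hx hy' hy.1 hm hk rfl h).trans (hy.2 m hm)⟩

lemma nb_congr (hS : SignSys s Ls Rs l r M v) (t : ℕ → ℝ) {x x' : α} (hx : x ∈ Ls)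
    (hx' : x' ∈ Ls) {k : ℕ} (hk : k ≤ s) (h : l k x = l k x') :
    nb Rs v t k x = nb Rs v t k x' := by
  refine Finset.filter_congr fun y hy => ?_
  refine forall_congr' fun m => forall_congr' fun hm => ?_
  rw [hS.const_le hx hx' hy hy hm hk h rfl]

lemma card_nb_inter [DecidableEq α] (hS : SignSys s Ls Rs l r M v) (t : ℕ → ℝ)
    (ht : ∀ k, t k = 1 ∨ t k = -1) {x : α} (hx : x ∈ Ls) (T : Finset α) (hT : T ⊆ Rs) (k d : ℕ)
    (hd : k + d ≤ s) (hcl : ∀ y ∈ T, ∀ y' ∈ Rs, r k y' = r k y → y' ∈ T) :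
    2 ^ d * (T ∩ nb Rs v t (k + d) x).card = (T ∩ nb Rs v t k x).card := by
  induction d with
  | zero => simp
  | succ d ih =>
    rw [← ih (by omega)]
    have e : T ∩ nb Rs v t (k + (d + 1)) x =
        (T ∩ nb Rs v t (k + d) x).filter fun y => v (k + d) x y = t (k + d) := by
      rw [← add_assoc, nb_succ, Finset.inter_filter]
    have hz := sum_zero_of_closed Rs (T ∩ nb Rs v t (k + d) x) (r (k + d))
      (Finset.inter_subset_left.trans hT) (by
        intro y hy y' hy' h
        rw [Finset.mem_inter] at hy ⊢
        exact ⟨hcl y hy.1 y' hy' (hS.rref' hy' (hT hy.1) k d (by omega) h),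
          hS.nb_closed t hx (by omega) hy.2 hy' h⟩) (v (k + d) x) (hS.bal _ (by omega) x hx)
    have := half_card _ _ (hS.pm (k + d) (by omega) x) hz (t (k + d)) (ht _)
    rw [e, ← this]
    ring

lemma card_nb_ratio [DecidableEq α] (hS : SignSys s Ls Rs l r M v) (t : ℕ → ℝ)
    (ht : ∀ k, t k = 1 ∨ t k = -1) {x : α} (hx : x ∈ Ls) (k d : ℕ)
    (hd : k + d ≤ s) : 2 ^ d * (nb Rs v t (k + d) x).card = (nb Rs v t k x).card := by
  have h := hS.card_nb_inter t ht hx Rs (Finset.Subset.refl _) k d hd (fun _ _ _ h _ => h)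
  have hs : ∀ j, Rs ∩ nb Rs v t j x = nb Rs v t j x := fun j =>
    Finset.inter_eq_right.2 (Finset.filter_subset _ _)
  rwa [hs, hs] at h

lemma card_nb [DecidableEq α] (hS : SignSys s Ls Rs l r M v) (t : ℕ → ℝ)
    (ht : ∀ k, t k = 1 ∨ t k = -1) {x : α} (hx : x ∈ Ls) (k : ℕ)
    (hd : k ≤ s) : 2 ^ k * (nb Rs v t k x).card = Rs.card := by
  have h := hS.card_nb_ratio t ht hx 0 k (by omega)
  rwa [zero_add, nb_zero] at h

lemma card_nb_sep [DecidableEq α] (hS : SignSys s Ls Rs l r M v) (t : ℕ → ℝ)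
    (ht : ∀ k, t k = 1 ∨ t k = -1) {x x' : α} (hx : x ∈ Ls) (hx' : x' ∈ Ls) (i : ℕ)
    (hi : i ≤ s) (hne : l i x ≠ l i x') :
    32 * (nb Rs v t i x ∩ nb Rs v t i x').card ≤ 17 * (nb Rs v t i x).card := by
  obtain ⟨k, hk, hk1, hk2⟩ : ∃ k < i, l k x = l k x' ∧ l (k + 1) x ≠ l (k + 1) x' := by
    clear hi
    induction i with
    | zero => exact absurd (hS.l0 x hx x' hx') hne
    | succ i ih =>
      by_cases h : l i x = l i x'
      · exact ⟨i, Nat.lt_succ_self i, h, hne⟩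
      · obtain ⟨k, h1, h2⟩ := ih h
        exact ⟨k, h1.trans (Nat.lt_succ_self i), h2⟩
  have hks : k < s := by omega
  set T := nb Rs v t k x with hTdef
  have hT' : nb Rs v t k x' = T := (hS.nb_congr t hx hx' hks.le hk1).symm
  have hTR : T ⊆ Rs := Finset.filter_subset _ _
  have hsep : ∑ y ∈ T, v k x y * v k x' y ≤ 1 / 16 * (T.card : ℝ) := by
    rcases T.eq_empty_or_nonempty with h | ⟨y, hy⟩
    · rw [h]; simp
    · have h := hS.sep k hks x hx x' hx' hk2 y (hTR hy)
      have e : Rs.filter (fun y' => ∀ m < k, v m x y' = v m x y) = T := by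
        refine Finset.filter_congr fun z _ => ?_
        refine forall_congr' fun m => forall_congr' fun hm => ?_
        rw [(mem_nb.1 hy).2 m hm]
      rwa [e] at h
  have hcl : ∀ y ∈ T, ∀ y' ∈ Rs, r k y' = r k y → y' ∈ T := fun y hy y' hy' h =>
    hS.nb_closed t hx hks.le hy hy' h
  have hz := sum_zero_of_closed Rs T (r k) hTR hcl (v k x) (hS.bal k hks x hx)
  have hz' := sum_zero_of_closed Rs T (r k) hTR hcl (v k x') (hS.bal k hks x' hx')
  set U := nb Rs v t (k + 1) x ∩ nb Rs v t (k + 1) x' with hU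
  have hUe : U = T.filter fun y => v k x y = t k ∧ v k x' y = t k := by
    rw [hU, nb_succ, nb_succ, hT', ← hTdef, ← Finset.filter_and]
  have hUc : 64 * U.card ≤ 17 * T.card := by
    have h1 : ∑ y ∈ T, (1 + t k * v k x y + t k * v k x' y + v k x y * v k x' y) =
        ∑ y ∈ T, (if v k x y = t k ∧ v k x' y = t k then (4 : ℝ) else 0) := by
      refine Finset.sum_congr rfl fun y _ => ?_
      rcases hS.pm k hks x y with h | h <;> rcases hS.pm k hks x' y with h'' | h'' <;>
        rcases ht k with h' | h' <;> rw [h, h', h''] <;> norm_num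
    rw [Finset.sum_add_distrib, Finset.sum_add_distrib, Finset.sum_add_distrib,
      ← Finset.mul_sum, ← Finset.mul_sum, hz, hz', ← Finset.sum_filter, ← hUe, Finset.sum_const,
      Finset.sum_const, nsmul_eq_mul, nsmul_eq_mul] at h1
    have : (64 : ℝ) * U.card ≤ 17 * T.card := by linarith
    exact_mod_cast this
  obtain ⟨d, rfl⟩ := Nat.exists_eq_add_of_lt hk
  have hUcl : ∀ y ∈ U, ∀ y' ∈ Rs, r (k + 1) y' = r (k + 1) y → y' ∈ U := by
    intro y hy y' hy' h
    rw [hU, Finset.mem_inter] at hy ⊢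
    exact ⟨hS.nb_closed t hx hks hy.1 hy' h, hS.nb_closed t hx' hks hy.2 hy' h⟩
  have e3 := hS.card_nb_inter t ht hx U
    (Finset.inter_subset_left.trans (Finset.filter_subset _ _)) (k + 1) d (by omega) hUcl
  have e4 := hS.card_nb_ratio t ht hx (k + 1) d (by omega)
  have e5 := hS.card_nb_ratio t ht hx k 1 hks
  rw [pow_one, ← hTdef] at e5
  rw [Finset.inter_eq_left.2 Finset.inter_subset_left] at e3
  have e6 : k + d + 1 = k + 1 + d := by omega
  rw [e6]
  have e7 : (nb Rs v t (k + 1 + d) x ∩ nb Rs v t (k + 1 + d) x').card ≤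
      (U ∩ nb Rs v t (k + 1 + d) x).card := by
    apply Finset.card_le_card
    intro y hy
    rw [Finset.mem_inter] at hy
    rw [hU, Finset.mem_inter, Finset.mem_inter]
    exact ⟨⟨nb_anti Rs v t (by omega) x hy.1, nb_anti Rs v t (by omega) x' hy.2⟩, hy.1⟩
  refine (Nat.mul_le_mul_left 32 e7).trans ?_
  refine Nat.le_of_mul_le_mul_left ?_ (Nat.two_pow_pos d)
  calc 2 ^ d * (32 * (U ∩ nb Rs v t (k + 1 + d) x).card)
      = 32 * (2 ^ d * (U ∩ nb Rs v t (k + 1 + d) x).card) := by ring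
    _ = 32 * U.card := by rw [e3]
    _ ≤ 17 * (2 ^ d * (nb Rs v t (k + 1 + d) x).card) := by rw [e4]; omega
    _ = _ := by ring

end SignSys

/-! ### Typical vertices -/

namespace SignSys

variable {α β : Type*} [DecidableEq β] {s : ℕ} {Ls Rs : Finset α} {l r : ℕ → α → β}
    {M : ℝ} {v : ℕ → α → α → ℝ}

lemma moment_sum [DecidableEq α] (hS : SignSys s Ls Rs l r M v) (hM : 0 < M) (t : ℕ → ℝ)
    (ht : ∀ k, t k = 1 ∨ t k = -1) (k : ℕ) (hk : k < s) (f : α → ℝ) (hf : ∀ z, |f z| ≤ 1) :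
    (2 ^ k * M) * ∑ x ∈ Ls, (∑ y ∈ nb Rs v t k x, v k x y * f y) ^ 2 ≤
      4 * Ls.card * ((Rs.card : ℝ) / 2 ^ k) ^ 2 := by
  have hc : ∀ x ∈ Ls, ((nb Rs v t k x).card : ℝ) = (Rs.card : ℝ) / 2 ^ k := by
    intro x hx
    rw [eq_div_iff (by positivity)]
    have := hS.card_nb t ht hx k hk.le
    rw [mul_comm]
    exact_mod_cast this
  rw [sum_closed Ls Ls (l k) (Finset.Subset.refl _) (fun _ _ y' hy' _ => hy'), Finset.mul_sum]
  have h1 : ∀ p ∈ Ls.image (l k), (2 ^ k * M) *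
      ∑ x ∈ Ls.filter (fun x => l k x = p), (∑ y ∈ nb Rs v t k x, v k x y * f y) ^ 2 ≤
      4 * ((Rs.card : ℝ) / 2 ^ k) ^ 2 * ∑ x ∈ Ls.filter (fun x => l k x = p), (1 : ℝ) := by
    intro p hp
    obtain ⟨x0, hx0, rfl⟩ := Finset.mem_image.1 hp
    have e : ∀ x ∈ Ls.filter (fun x => l k x = l k x0),
        (∑ y ∈ nb Rs v t k x, v k x y * f y) ^ 2 =
        (∑ y ∈ nb Rs v t k x0, v k x y * f y) ^ 2 := by
      intro x hx
      rw [Finset.mem_filter] at hx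
      rw [hS.nb_congr t hx.1 hx0 hk.le hx.2]
    rw [Finset.sum_congr rfl e]
    rcases (nb Rs v t k x0).eq_empty_or_nonempty with h | ⟨y, hy⟩
    · rw [h]; simp; positivity
    · have hm := hS.mom k hk x0 hx0 y (mem_nb.1 hy).1 f hf
      have e2 : Rs.filter (fun y' => ∀ m < k, v m x0 y' = v m x0 y) = nb Rs v t k x0 := by
        refine Finset.filter_congr fun z _ => ?_
        refine forall_congr' fun m => forall_congr' fun hm => ?_
        rw [(mem_nb.1 hy).2 m hm]
      rw [e2, hc x0 hx0] at hm
      refine hm.trans (le_of_eq ?_)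
      rw [Finset.sum_const, nsmul_eq_mul, mul_one]
      ring
  refine (Finset.sum_le_sum h1).trans (le_of_eq ?_)
  rw [← Finset.mul_sum, ← sum_closed Ls Ls (l k) (Finset.Subset.refl _) (fun _ _ y' hy' _ => hy'),
    Finset.sum_const, nsmul_eq_mul, mul_one]
  ring

lemma first_moment [DecidableEq α] (hS : SignSys s Ls Rs l r M v) (hM : 0 < M) (t : ℕ → ℝ)
    (ht : ∀ k, t k = 1 ∨ t k = -1) (k : ℕ) (hk : k < s) (f : α → ℝ) (hf : ∀ z, |f z| ≤ 1) :
    ∑ x ∈ Ls, 2 ^ k * |∑ y ∈ nb Rs v t k x, v k x y * f y| ≤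
      2 * (3 / 4) ^ k * (Ls.card * Rs.card / Real.sqrt M) := by
  have hm := hS.moment_sum hM t ht k hk f hf
  set S : α → ℝ := fun x => ∑ y ∈ nb Rs v t k x, v k x y * f y with hSd
  have hsq := Real.sq_sqrt hM.le
  have hsp := Real.sqrt_pos.2 hM
  have hcs : (∑ x ∈ Ls, |S x|) ^ 2 ≤ Ls.card * ∑ x ∈ Ls, S x ^ 2 := by
    have := sq_sum_le_card_mul_sum_sq (s := Ls) (f := fun x => |S x|)
    simpa only [sq_abs] using this
  have h2 : ∑ x ∈ Ls, S x ^ 2 ≤ 4 * Ls.card * ((Rs.card : ℝ) / 2 ^ k) ^ 2 / (2 ^ k * M) := by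
    rw [le_div_iff₀ (by positivity), mul_comm]
    exact hm
  rw [← Finset.mul_sum]
  refine abs_le_of_sq_le_sq' ?_ (by positivity) |>.2
  have hpow : ((1 : ℝ) / 2) ^ k ≤ (9 / 16) ^ k := pow_le_pow_left₀ (by norm_num) (by norm_num) k
  calc (2 ^ k * ∑ x ∈ Ls, |S x|) ^ 2 = (2 ^ k) ^ 2 * (∑ x ∈ Ls, |S x|) ^ 2 := by ring
    _ ≤ (2 ^ k) ^ 2 * (Ls.card * (4 * Ls.card * ((Rs.card : ℝ) / 2 ^ k) ^ 2 / (2 ^ k * M))) := by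
        gcongr
        exact hcs.trans (by gcongr)
    _ = 4 * ((Ls.card : ℝ) * Rs.card) ^ 2 / M * (1 / 2) ^ k := by
        rw [one_div, inv_pow]
        field_simp
    _ ≤ 4 * ((Ls.card : ℝ) * Rs.card) ^ 2 / M * (9 / 16) ^ k := by gcongr
    _ = (2 * (3 / 4) ^ k * (Ls.card * Rs.card / Real.sqrt M)) ^ 2 := by
        rw [show (9 / 16 : ℝ) = (3 / 4) ^ 2 by norm_num, ← pow_mul, mul_comm 2 k, pow_mul]
        conv_lhs => rw [← hsq]
        field_simp
        ring

lemma nb_sum_succ (hS : SignSys s Ls Rs l r M v) (t : ℕ → ℝ)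
    (ht : ∀ k, t k = 1 ∨ t k = -1) (k : ℕ) (hk : k < s) (f : α → ℝ) (x : α) :
    2 ^ (k + 1) * ∑ y ∈ nb Rs v t (k + 1) x, f y = 2 ^ k * ∑ y ∈ nb Rs v t k x, f y +
      t k * (2 ^ k * ∑ y ∈ nb Rs v t k x, v k x y * f y) := by
  have h : ∑ y ∈ nb Rs v t (k + 1) x, f y =
      ∑ y ∈ nb Rs v t k x, ((1 / 2) * f y + (t k / 2) * (v k x y * f y)) := by
    rw [nb_succ, Finset.sum_filter]
    refine Finset.sum_congr rfl fun y _ => ?_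
    rcases hS.pm k hk x y with h | h <;> rcases ht k with h' | h' <;> rw [h, h'] <;>
      norm_num <;> ring
  rw [h, Finset.sum_add_distrib, ← Finset.mul_sum, ← Finset.mul_sum]
  ring

lemma deviation [DecidableEq α] (hS : SignSys s Ls Rs l r M v) (hM : 0 < M) (t : ℕ → ℝ)
    (ht : ∀ k, t k = 1 ∨ t k = -1) (j : ℕ) (hj : j ≤ s) (f : α → ℝ) (hf : ∀ z, |f z| ≤ 1) :
    ∑ x ∈ Ls, |2 ^ j * ∑ y ∈ nb Rs v t j x, f y - ∑ y ∈ Rs, f y| ≤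
      8 * (Ls.card * Rs.card / Real.sqrt M) := by
  have hsp := Real.sqrt_pos.2 hM
  have key : ∀ j ≤ s, ∑ x ∈ Ls, |2 ^ j * ∑ y ∈ nb Rs v t j x, f y - ∑ y ∈ Rs, f y| ≤
      8 * (1 - (3 / 4) ^ j) * (Ls.card * Rs.card / Real.sqrt M) := by
    intro j
    induction j with
    | zero => intro _; simp [nb_zero]
    | succ j ih =>
      intro hj
      have h1 := ih (by omega)
      have h2 := hS.first_moment hM t ht j hj f hf
      have h3 : ∑ x ∈ Ls, |2 ^ (j + 1) * ∑ y ∈ nb Rs v t (j + 1) x, f y - ∑ y ∈ Rs, f y| ≤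
          ∑ x ∈ Ls, (|2 ^ j * ∑ y ∈ nb Rs v t j x, f y - ∑ y ∈ Rs, f y| +
            2 ^ j * |∑ y ∈ nb Rs v t j x, v j x y * f y|) := by
        refine Finset.sum_le_sum fun x _ => ?_
        rw [hS.nb_sum_succ t ht j hj f x]
        have e : |t j * (2 ^ j * ∑ y ∈ nb Rs v t j x, v j x y * f y)| =
            2 ^ j * |∑ y ∈ nb Rs v t j x, v j x y * f y| := by
          rw [abs_mul, abs_mul, abs_of_nonneg (by positivity : (0 : ℝ) ≤ 2 ^ j)]
          rcases ht j with h | h <;> rw [h] <;> simp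
        rw [← e, add_sub_right_comm]
        exact abs_add_le _ _
      rw [Finset.sum_add_distrib] at h3
      refine h3.trans ((add_le_add h1 h2).trans (le_of_eq ?_))
      rw [pow_succ]; ring
  refine (key j hj).trans ?_
  apply mul_le_mul_of_nonneg_right _ (by positivity)
  have : (0 : ℝ) < (3 / 4) ^ j := by positivity
  linarith

end SignSys

/-! ### The main lemma on unbalanced neighbourhoods -/

/-- The number of `x ∈ A` whose level `i` neighbourhood contains `y`. -/
def wt {α : Type*} (Rs : Finset α) (v : ℕ → α → α → ℝ) (t : ℕ → ℝ) (i : ℕ) (A : Finset α)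
    (y : α) : ℝ :=
  ((A.filter fun x => y ∈ nb Rs v t i x).card : ℝ)

/-- The vertices `y` that are missed by a `γ / 8` fraction of `A`. -/
def YA {α : Type*} (Rs : Finset α) (v : ℕ → α → α → ℝ) (t : ℕ → ℝ) (i : ℕ) (A : Finset α)
    (γ : ℝ) : Finset α :=
  Rs.filter fun y => wt Rs v t i A y ≤ (1 - γ / 8) * A.card

lemma wt_eq {α : Type*} [DecidableEq α] (Rs : Finset α) (v : ℕ → α → α → ℝ) (t : ℕ → ℝ) (i : ℕ) (A : Finset α)
    (y : α) : wt Rs v t i A y = ∑ x ∈ A, if y ∈ nb Rs v t i x then (1 : ℝ) else 0 := by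
  rw [wt, Finset.sum_boole]
  norm_cast
  congr

lemma sum_wt {α : Type*} [DecidableEq α] (Rs : Finset α) (v : ℕ → α → α → ℝ) (t : ℕ → ℝ) (i : ℕ)
    (A T : Finset α) :
    ∑ y ∈ T, wt Rs v t i A y = ∑ x ∈ A, ((T ∩ nb Rs v t i x).card : ℝ) := by
  simp_rw [wt_eq]
  rw [Finset.sum_comm]
  refine Finset.sum_congr rfl fun x _ => ?_
  rw [Finset.sum_boole, Finset.filter_mem_eq_inter]

lemma sum_wt_sq {α : Type*} [DecidableEq α] (Rs : Finset α) (v : ℕ → α → α → ℝ) (t : ℕ → ℝ)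
    (i : ℕ) (A : Finset α) :
    ∑ y ∈ Rs, wt Rs v t i A y ^ 2 =
      ∑ x ∈ A, ∑ x' ∈ A, ((nb Rs v t i x ∩ nb Rs v t i x').card : ℝ) := by
  have h1 : ∀ y ∈ Rs, wt Rs v t i A y ^ 2 = ∑ x ∈ A, ∑ x' ∈ A,
      (if y ∈ nb Rs v t i x ∩ nb Rs v t i x' then (1 : ℝ) else 0) := by
    intro y _
    rw [wt_eq, sq, Finset.sum_mul_sum]
    refine Finset.sum_congr rfl fun x _ => Finset.sum_congr rfl fun x' _ => ?_
    by_cases h : y ∈ nb Rs v t i x <;> by_cases h' : y ∈ nb Rs v t i x' <;> simp [Finset.mem_inter, h, h']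
  rw [Finset.sum_congr rfl h1, Finset.sum_comm]
  refine Finset.sum_congr rfl fun x _ => ?_
  rw [Finset.sum_comm]
  refine Finset.sum_congr rfl fun x' _ => ?_
  rw [← Finset.sum_filter, Finset.filter_mem_eq_inter]
  have : Rs ∩ (nb Rs v t i x ∩ nb Rs v t i x') = nb Rs v t i x ∩ nb Rs v t i x' :=
    Finset.inter_eq_right.2 (Finset.inter_subset_left.trans (Finset.filter_subset _ _))
  rw [this]
  simp

lemma wt_le {α : Type*} (Rs : Finset α) (v : ℕ → α → α → ℝ) (t : ℕ → ℝ)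
    (i : ℕ) (A : Finset α) (y : α) : wt Rs v t i A y ≤ A.card := by
  rw [wt]
  exact_mod_cast Finset.card_filter_le _ _

lemma wt_nonneg {α : Type*} (Rs : Finset α) (v : ℕ → α → α → ℝ) (t : ℕ → ℝ)
    (i : ℕ) (A : Finset α) (y : α) : 0 ≤ wt Rs v t i A y := by
  rw [wt]; positivity

namespace SignSys

variable {α β : Type*} [DecidableEq β] {s : ℕ} {Ls Rs : Finset α} {l r : ℕ → α → β}
    {M : ℝ} {v : ℕ → α → α → ℝ}

lemma inter_sum_le [DecidableEq α] (hS : SignSys s Ls Rs l r M v) (t : ℕ → ℝ)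
    (ht : ∀ k, t k = 1 ∨ t k = -1) (i : ℕ) (hi : i ≤ s) (A : Finset α) (hA : A ⊆ Ls) (n : ℝ)
    (hn : ∀ x ∈ Ls, ((nb Rs v t i x).card : ℝ) = n) (x : α) (hx : x ∈ A) :
    ∑ x' ∈ A, ((nb Rs v t i x ∩ nb Rs v t i x').card : ℝ) ≤
      17 / 32 * n * A.card + 15 / 32 * n * (A.filter fun x' => l i x' = l i x).card := by
  have h1 : ∀ x' ∈ A, ((nb Rs v t i x ∩ nb Rs v t i x').card : ℝ) ≤
      17 / 32 * n + (if l i x' = l i x then 15 / 32 * n else 0) := by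
    intro x' hx'
    have hn0 := hn x (hA hx)
    split_ifs with h
    · have : ((nb Rs v t i x ∩ nb Rs v t i x').card : ℝ) ≤ (nb Rs v t i x).card := by
        exact_mod_cast Finset.card_le_card Finset.inter_subset_left
      linarith
    · have := hS.card_nb_sep t ht (hA hx) (hA hx') i hi (fun e => h e.symm)
      have : (32 : ℝ) * (nb Rs v t i x ∩ nb Rs v t i x').card ≤ 17 * (nb Rs v t i x).card := by
        exact_mod_cast this
      linarith
  refine (Finset.sum_le_sum h1).trans (le_of_eq ?_)
  rw [Finset.sum_add_distrib, ← Finset.sum_filter, Finset.sum_const, Finset.sum_const,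
    nsmul_eq_mul, nsmul_eq_mul]
  ring

lemma main_unbalanced [DecidableEq α] (hS : SignSys s Ls Rs l r M v) (t : ℕ → ℝ)
    (ht : ∀ k, t k = 1 ∨ t k = -1) (i : ℕ) (hi : i ≤ s) (A : Finset α) (hA : A ⊆ Ls)
    (hAne : A.Nonempty) (n : ℝ) (hn0 : 0 ≤ n)
    (hn : ∀ x ∈ Ls, ((nb Rs v t i x).card : ℝ) = n) (γ : ℝ) (hγ0 : 0 < γ) (hγ1 : γ ≤ 1)
    (hbad : ∀ x ∈ A, ((A.filter fun x' => l i x' = l i x).card : ℝ) ≤ (1 - γ) * A.card) :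
    7 / 64 * (A.card * n) ≤ ∑ y ∈ YA Rs v t i A γ, wt Rs v t i A y := by
  have ha : (0 : ℝ) < A.card := by exact_mod_cast Finset.card_pos.2 hAne
  set a : ℝ := (A.card : ℝ) with had
  set w := wt Rs v t i A with hw
  have hsum : ∑ y ∈ Rs, w y = a * n := by
    rw [hw, sum_wt]
    have : ∀ x ∈ A, ((Rs ∩ nb Rs v t i x).card : ℝ) = n := by
      intro x hx
      rw [show Rs ∩ nb Rs v t i x = nb Rs v t i x from
        Finset.inter_eq_right.2 (Finset.filter_subset _ _), hn x (hA hx)]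
    rw [Finset.sum_congr rfl this, Finset.sum_const, nsmul_eq_mul]
  by_cases hc : ∀ x ∈ A, ((A.filter fun x' => l i x' = l i x).card : ℝ) ≤ a / 2
  · have hsq : ∑ y ∈ Rs, w y ^ 2 ≤ 49 / 64 * a ^ 2 * n := by
      rw [hw, sum_wt_sq]
      have : ∀ x ∈ A, ∑ x' ∈ A, ((nb Rs v t i x ∩ nb Rs v t i x').card : ℝ) ≤
          49 / 64 * a * n := by
        intro x hx
        have h1 := hS.inter_sum_le t ht i hi A hA n hn x hx
        have h2 := hc x hx
        nlinarith
      refine (Finset.sum_le_sum this).trans (le_of_eq ?_)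
      rw [Finset.sum_const, nsmul_eq_mul]; ring
    have h1 : ∑ y ∈ Rs, w y * (a - w y) ≤
        ∑ y ∈ Rs, ((if w y ≤ (1 - γ / 8) * a then a * w y else 0) + γ / 8 * a * w y) := by
      refine Finset.sum_le_sum fun y _ => ?_
      have hw0 := wt_nonneg Rs v t i A y
      rw [← hw] at hw0
      split_ifs with h
      · have : 0 ≤ γ / 8 * a * w y := by positivity
        nlinarith
      · push Not at h
        nlinarith
    have h2 : ∑ y ∈ Rs, w y * (a - w y) = a * ∑ y ∈ Rs, w y - ∑ y ∈ Rs, w y ^ 2 := by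
      rw [Finset.mul_sum, ← Finset.sum_sub_distrib]
      exact Finset.sum_congr rfl fun y _ => by ring
    rw [Finset.sum_add_distrib, ← Finset.sum_filter, ← Finset.mul_sum, ← Finset.mul_sum, hsum] at h1
    rw [h2, hsum] at h1
    have h3 : Rs.filter (fun y => w y ≤ (1 - γ / 8) * a) = YA Rs v t i A γ := rfl
    rw [h3] at h1
    have h4 : γ / 8 * a * (a * n) ≤ 1 / 8 * a * (a * n) := by
      have : 0 ≤ a * (a * n) := by positivity
      nlinarith
    have h5 : a * (7 / 64 * (a * n)) ≤ a * ∑ y ∈ YA Rs v t i A γ, w y := by nlinarith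
    exact le_of_mul_le_mul_left h5 ha
  · push Not at hc
    obtain ⟨x0, hx0, hF⟩ := hc
    set F := A.filter fun x' => l i x' = l i x0 with hFd
    set N0 := nb Rs v t i x0 with hN0
    have hb := hbad x0 hx0
    have hwF : ∀ y ∈ N0, (F.card : ℝ) ≤ w y := by
      intro y hy
      rw [hw, wt]
      have : F ⊆ A.filter fun x => y ∈ nb Rs v t i x := by
        intro x hx
        rw [hFd, Finset.mem_filter] at hx
        rw [Finset.mem_filter]
        refine ⟨hx.1, ?_⟩
        rw [hS.nb_congr t (hA hx.1) (hA hx0) hi hx.2]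
        exact hy
      rw [Nat.cast_le]
      convert Finset.card_le_card this
    have h1 : ∑ y ∈ N0, w y ≤ 17 / 32 * n * a + 15 / 32 * n * F.card := by
      rw [hw, sum_wt]
      exact hS.inter_sum_le t ht i hi A hA n hn x0 hx0
    have hS0 : N0.filter (fun y => w y ≤ (1 - γ / 8) * a) ⊆ YA Rs v t i A γ :=
      Finset.filter_subset_filter _ (Finset.filter_subset _ _)
    set S := N0.filter (fun y => w y ≤ (1 - γ / 8) * a) with hSd
    have hg : 0 < a - F.card := by nlinarith
    have h2 : ∑ y ∈ N0, (a - w y) ≤ ∑ y ∈ N0,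
        ((if w y ≤ (1 - γ / 8) * a then (a - F.card) else 0) + (a - F.card) / 8) := by
      refine Finset.sum_le_sum fun y hy => ?_
      have := hwF y hy
      split_ifs with h
      · linarith
      · push Not at h
        nlinarith
    have hN0c : (N0.card : ℝ) = n := hn x0 (hA hx0)
    rw [Finset.sum_sub_distrib, Finset.sum_add_distrib, ← Finset.sum_filter, ← hSd,
      Finset.sum_const, Finset.sum_const, Finset.sum_const, nsmul_eq_mul, nsmul_eq_mul,
      nsmul_eq_mul, hN0c] at h2
    have h3 : (a - F.card) * (11 / 32 * n) ≤ (a - F.card) * S.card := by nlinarith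
    have h4 := le_of_mul_le_mul_left h3 hg
    have h5 : (S.card : ℝ) * F.card ≤ ∑ y ∈ S, w y := by
      rw [← nsmul_eq_mul]
      exact Finset.card_nsmul_le_sum _ _ _ fun y hy => hwF y (Finset.filter_subset _ _ hy)
    have h6 : ∑ y ∈ S, w y ≤ ∑ y ∈ YA Rs v t i A γ, w y :=
      Finset.sum_le_sum_of_subset_of_nonneg hS0 fun y _ _ => wt_nonneg Rs v t i A y
    have h7 : 11 / 32 * n * (a / 2) ≤ S.card * F.card := by gcongr
    have : 0 ≤ a * n := by positivity
    linarith

lemma wt_congr (hS : SignSys s Ls Rs l r M v) (t : ℕ → ℝ) (i : ℕ) (hi : i ≤ s) (A : Finset α)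
    (hA : A ⊆ Ls) {y y' : α} (hy : y ∈ Rs) (hy' : y' ∈ Rs) (h : r i y' = r i y) :
    wt Rs v t i A y' = wt Rs v t i A y := by
  rw [wt, wt]
  congr 2
  refine Finset.filter_congr fun x hx => ?_
  exact ⟨fun h1 => hS.nb_closed t (hA hx) hi h1 hy h.symm,
    fun h1 => hS.nb_closed t (hA hx) hi h1 hy' h⟩

lemma YA_closed (hS : SignSys s Ls Rs l r M v) (t : ℕ → ℝ) (i : ℕ) (hi : i ≤ s) (A : Finset α)
    (hA : A ⊆ Ls) (γ : ℝ) : ∀ y ∈ YA Rs v t i A γ, ∀ y' ∈ Rs, r i y' = r i y →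
      y' ∈ YA Rs v t i A γ := by
  intro y hy y' hy' h
  rw [YA, Finset.mem_filter] at hy ⊢
  exact ⟨hy', by rw [hS.wt_congr t i hi A hA hy.1 hy' h]; exact hy.2⟩

lemma YA_edges [DecidableEq α] (hS : SignSys s Ls Rs l r M v) (t : ℕ → ℝ)
    (ht : ∀ k, t k = 1 ∨ t k = -1) (i j : ℕ) (hij : i ≤ j) (hj : j ≤ s) (A : Finset α)
    (hA : A ⊆ Ls) (hAne : A.Nonempty) (γ : ℝ) (hγ0 : 0 < γ) (hγ1 : γ ≤ 1)
    (hbad : ∀ x ∈ A, ((A.filter fun x' => l i x' = l i x).card : ℝ) ≤ (1 - γ) * A.card) :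
    7 / 64 * (A.card * ((Rs.card : ℝ) / 2 ^ j)) ≤
      ∑ x ∈ A, ((YA Rs v t i A γ ∩ nb Rs v t j x).card : ℝ) := by
  have hi : i ≤ s := hij.trans hj
  have h := hS.main_unbalanced t ht i hi A hA hAne ((Rs.card : ℝ) / 2 ^ i) (by positivity)
    (fun x hx => by
      rw [eq_div_iff (by positivity), mul_comm]
      exact_mod_cast hS.card_nb t ht hx i hi) γ hγ0 hγ1 hbad
  rw [sum_wt] at h
  obtain ⟨d, rfl⟩ := Nat.exists_eq_add_of_le hij
  have h2 : ∀ x ∈ A, ((YA Rs v t i A γ ∩ nb Rs v t i x).card : ℝ) =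
      2 ^ d * ((YA Rs v t i A γ ∩ nb Rs v t (i + d) x).card : ℝ) := by
    intro x hx
    have := hS.card_nb_inter t ht (hA hx) (YA Rs v t i A γ) (Finset.filter_subset _ _) i d hj
      (hS.YA_closed t i hi A hA γ)
    exact_mod_cast this.symm
  rw [Finset.sum_congr rfl h2, ← Finset.mul_sum] at h
  have h3 : (Rs.card : ℝ) / 2 ^ i = 2 ^ d * ((Rs.card : ℝ) / 2 ^ (i + d)) := by
    rw [pow_add]; field_simp
  rw [h3] at h
  have h4 : (2 : ℝ) ^ d * (7 / 64 * (A.card * ((Rs.card : ℝ) / 2 ^ (i + d)))) ≤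
      2 ^ d * ∑ x ∈ A, ((YA Rs v t i A γ ∩ nb Rs v t (i + d) x).card : ℝ) := by
    refine le_trans (le_of_eq ?_) h; ring
  exact le_of_mul_le_mul_left h4 (by positivity)

end SignSys

/-! ### Edge counts and the final argument -/

/-- The graph of level `j` with sign pattern `t`. -/
def gr {α : Type*} (Ls Rs : Finset α) (v : ℕ → α → α → ℝ) (t : ℕ → ℝ) (j : ℕ) :
    Finset (α × α) :=
  (Ls ×ˢ Rs).filter fun q => ∀ m < j, v m q.1 q.2 = t m

lemma mem_gr {α : Type*} {Ls Rs : Finset α} {v : ℕ → α → α → ℝ} {t : ℕ → ℝ} {j : ℕ}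
    {q : α × α} : q ∈ gr Ls Rs v t j ↔ q.1 ∈ Ls ∧ q.2 ∈ nb Rs v t j q.1 := by
  rw [gr, Finset.mem_filter, Finset.mem_product, mem_nb, and_assoc]

lemma bmEdges_eq {α : Type*} [DecidableEq α] (g : Finset (α × α)) (A B : Finset α) :
    bmEdges g A B = (g.filter fun p => p.1 ∈ A ∧ p.2 ∈ B).card := by
  rw [bmEdges]
  congr

lemma bmEdges_gr {α : Type*} [DecidableEq α] (Ls Rs : Finset α) (v : ℕ → α → α → ℝ) (t : ℕ → ℝ)
    (j : ℕ) (A B : Finset α) (hA : A ⊆ Ls) :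
    bmEdges (gr Ls Rs v t j) A B = ∑ x ∈ A, (B ∩ nb Rs v t j x).card := by
  have h : ((gr Ls Rs v t j).filter fun (p : α × α) => p.1 ∈ A ∧ p.2 ∈ B) =
      (A.sigma (fun x => B ∩ nb Rs v t j x)).map
        ⟨fun z => (z.1, z.2), fun z w hzw => by
          rcases z with ⟨z1, z2⟩; rcases w with ⟨w1, w2⟩
          simp only [Prod.mk.injEq] at hzw
          rcases hzw with ⟨rfl, rfl⟩; rfl⟩ := by
    ext ⟨x, y⟩
    simp only [Finset.mem_filter, mem_gr, Finset.mem_map, Finset.mem_sigma, Finset.mem_inter]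
    constructor
    · rintro ⟨⟨h1, h2⟩, h3, h4⟩
      exact ⟨⟨x, y⟩, ⟨h3, h4, h2⟩, rfl⟩
    · rintro ⟨⟨x', y'⟩, ⟨h3, h4, h2⟩, h5⟩
      simp only [Function.Embedding.coeFn_mk, Prod.mk.injEq] at h2 h3 h4 h5
      obtain ⟨rfl, rfl⟩ := h5
      exact ⟨⟨hA h3, h2⟩, h3, h4⟩
  rw [bmEdges_eq, h, Finset.card_map, Finset.card_sigma]

lemma bmEdges_all {α : Type*} [DecidableEq α] (g : Finset (α × α)) (Ls Rs : Finset α)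
    (hg : g ⊆ Ls ×ˢ Rs) : bmEdges g Ls Rs = g.card := by
  rw [bmEdges_eq]
  congr 1
  refine Finset.filter_true_of_mem fun q hq => ?_
  exact Finset.mem_product.1 (hg hq)

lemma bmEdges_mono {α : Type*} (g g' : Finset (α × α)) (A A' B B' : Finset α)
    (hg : g ⊆ g') (hA : A ⊆ A') (hB : B ⊆ B') : bmEdges g A B ≤ bmEdges g' A' B' := by
  refine Finset.card_le_card fun q hq => ?_
  rw [Finset.mem_filter] at hq ⊢
  exact ⟨hg hq.1, hA hq.2.1, hB hq.2.2⟩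

lemma bmEdges_sum {α : Type*} [DecidableEq α] (g : Finset (α × α)) (Ls Rs : Finset α)
    (hg : g ⊆ Ls ×ˢ Rs) (P Q : Finset (Finset α)) (hP : IsPartition P Ls)
    (hQ : IsPartition Q Rs) : ∑ A ∈ P, ∑ B ∈ Q, bmEdges g A B = g.card := by
  have h1 : ∀ A ∈ P, ∀ B ∈ Q, bmEdges g A B =
      (g.filter fun q => (partOf P q.1, partOf Q q.2) = (A, B)).card := by
    intro A hA B hB
    rw [bmEdges_eq]
    congr 1
    refine Finset.filter_congr fun q hq => ?_
    have hq' := Finset.mem_product.1 (hg hq)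
    rw [Prod.mk.injEq]
    constructor
    · rintro ⟨h1, h2⟩
      exact ⟨partOf_eq hP hA h1, partOf_eq hQ hB h2⟩
    · rintro ⟨h1, h2⟩
      rw [← h1, ← h2]
      exact ⟨(partOf_spec hP hq'.1).2, (partOf_spec hQ hq'.2).2⟩
  rw [Finset.sum_congr rfl fun A hA => Finset.sum_congr rfl (h1 A hA),
    ← Finset.sum_product' P Q fun A B =>
      (g.filter fun q => (partOf P q.1, partOf Q q.2) = (A, B)).card]
  rw [Finset.card_eq_sum_card_fiberwise (f := fun q => (partOf P q.1, partOf Q q.2))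
    (t := P ×ˢ Q)]
  intro q hq
  have hq' := Finset.mem_product.1 (hg hq)
  simp only [Finset.coe_product, Set.mem_prod, Finset.mem_coe]
  exact ⟨(partOf_spec hP hq'.1).1, (partOf_spec hQ hq'.2).1⟩

lemma bad_fibre {α : Type*} [DecidableEq α] (Ls : Finset α) (P : Finset (Finset α))
    (hP : IsPartition P Ls) (A : Finset α) (hA : A ⊆ Ls) (γ : ℝ) (h : ¬ ApproxMem γ A P) :
    ∀ x ∈ A, ((A.filter fun x' => partOf P x' = partOf P x).card : ℝ) ≤ (1 - γ) * A.card := by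
  intro x hx
  have h1 : ¬ ApproxSub γ A (partOf P x) := fun h2 => h ⟨_, (partOf_spec hP (hA hx)).1, h2⟩
  rw [ApproxSub, not_lt] at h1
  have h2 : (A.filter fun x' => partOf P x' = partOf P x) ⊆ A ∩ partOf P x := by
    intro x' hx'
    rw [Finset.mem_filter] at hx'
    rw [Finset.mem_inter, ← hx'.2]
    exact ⟨hx'.1, (partOf_spec hP (hA hx'.1)).2⟩
  have h3 := Finset.card_le_card h2
  have h4 := Finset.card_sdiff_add_card_inter A (partOf P x)
  have h3' : ((A.filter fun x' => partOf P x' = partOf P x).card : ℝ) ≤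
    (A ∩ partOf P x).card := by exact_mod_cast h3
  have h4' : ((A \ partOf P x).card : ℝ) + (A ∩ partOf P x).card = A.card := by
    exact_mod_cast h4
  linarith

lemma pair_mod {α : Type*} [DecidableEq α] (g G' : Finset (α × α)) (A B A' B' : Finset α)
    (δ γ : ℝ) (hreg : DeltaReg δ G' A B) (h0 : bmEdges g A' B' = 0) (hA' : A' ⊆ A) (hB' : B' ⊆ B)
    (hA : A.Nonempty) (hB : B.Nonempty) (hγ0 : 0 < γ) (hγ1 : γ ≤ 1) (hδγ : δ ≤ γ / 8)
    (hδ : δ ≤ 1 / 2) (hcA : γ / 8 * A.card ≤ A'.card) (hcB : (B.card : ℝ) ≤ 2 * B'.card) :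
    γ / 32 * bmEdges g A B ≤ (bmEdges (G' \ g) A B : ℝ) + bmEdges (g \ G') A B := by
  have ha : (0 : ℝ) < A.card := by exact_mod_cast Finset.card_pos.2 hA
  have hb : (0 : ℝ) < B.card := by exact_mod_cast Finset.card_pos.2 hB
  have h1 := hreg A' hA' B' hB' (by nlinarith) (by nlinarith)
  have ha' : (0 : ℝ) < A'.card := by nlinarith
  have hb' : (0 : ℝ) < B'.card := by nlinarith
  rw [bmDens, bmDens, ge_iff_le, le_div_iff₀ (by positivity)] at h1
  have h2 : γ / 32 * bmEdges G' A B ≤ bmEdges G' A' B' := by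
    refine le_trans ?_ h1
    have h3 : γ / 16 * (A.card * B.card) ≤ (A'.card * B'.card : ℝ) := by
      calc γ / 16 * (A.card * B.card) = (γ / 8 * A.card) * (B.card / 2 : ℝ) := by ring
        _ ≤ A'.card * B'.card := by gcongr; linarith
    calc γ / 32 * (bmEdges G' A B : ℝ)
        = 1 / 2 * (bmEdges G' A B / (A.card * B.card : ℝ)) * (γ / 16 * (A.card * B.card)) := by
          field_simp; ring
      _ ≤ _ := by gcongr
  have h3 : bmEdges G' A' B' ≤ bmEdges (G' \ g) A B := by
    rw [bmEdges_eq, Finset.card_eq_zero, Finset.filter_eq_empty_iff] at h0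
    rw [bmEdges_eq, bmEdges_eq]
    refine Finset.card_le_card fun q hq => ?_
    rw [Finset.mem_filter] at hq
    rw [Finset.mem_filter, Finset.mem_sdiff]
    exact ⟨⟨hq.1, fun hg => h0 hg hq.2⟩, hA' hq.2.1, hB' hq.2.2⟩
  have h4 : bmEdges g A B ≤ bmEdges G' A B + bmEdges (g \ G') A B := by
    rw [bmEdges_eq, bmEdges_eq, bmEdges_eq]
    refine (Finset.card_le_card fun q hq => ?_).trans (Finset.card_union_le _ _)
    rw [Finset.mem_filter] at hq
    rw [Finset.mem_union, Finset.mem_filter, Finset.mem_filter, Finset.mem_sdiff]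
    by_cases h : q ∈ G'
    · exact Or.inl ⟨h, hq.2⟩
    · exact Or.inr ⟨⟨hq.1, h⟩, hq.2⟩
  have h3' : (bmEdges G' A' B' : ℝ) ≤ bmEdges (G' \ g) A B := by exact_mod_cast h3
  have h4' : (bmEdges g A B : ℝ) ≤ bmEdges G' A B + bmEdges (g \ G') A B := by exact_mod_cast h4
  have h5 : (0 : ℝ) ≤ bmEdges (g \ G') A B := by positivity
  nlinarith

lemma exc_card {α : Type*} [DecidableEq α] (Rs : Finset α) (Q T : Finset (Finset α))
    (hQ : IsPartition Q Rs) (η : ℝ) (hη : 0 ≤ η) (h : ApproxRefines η Q T Rs) :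
    ((Rs.filter fun y => ¬ ∃ t ∈ T, ApproxSub η (partOf Q y) t ∧ y ∈ t).card : ℝ) ≤
      2 * η * Rs.card := by
  set E := Rs.filter fun y => ¬ ∃ t ∈ T, ApproxSub η (partOf Q y) t ∧ y ∈ t with hE
  have h1 : (E.card : ℝ) = ∑ y ∈ Rs, if y ∈ E then (1 : ℝ) else 0 := by
    rw [Finset.sum_boole, Finset.filter_mem_eq_inter,
      Finset.inter_eq_right.2 (Finset.filter_subset _ _)]
  rw [h1, sum_parts hQ]
  have h2 : ∀ B ∈ Q, (∑ y ∈ B, if y ∈ E then (1 : ℝ) else 0) ≤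
      (if ¬ ApproxMem η B T then (B.card : ℝ) else 0) + η * B.card := by
    intro B hB
    rw [Finset.sum_boole, Finset.filter_mem_eq_inter]
    have hBn : (0 : ℝ) ≤ η * B.card := by positivity
    split_ifs with hc
    swap
    · have : ((B ∩ E).card : ℝ) ≤ B.card := by
        exact_mod_cast Finset.card_le_card Finset.inter_subset_left
      linarith
    · obtain ⟨t, ht, hs⟩ := hc
      have hsub : B ∩ E ⊆ B \ t := by
        intro y hy
        rw [Finset.mem_inter, hE, Finset.mem_filter] at hy
        rw [Finset.mem_sdiff]
        refine ⟨hy.1, fun hyt => hy.2.2 ⟨t, ht, ?_, hyt⟩⟩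
        rw [partOf_eq hQ hB hy.1]
        exact hs
      have : ((B ∩ E).card : ℝ) ≤ (B \ t).card := by
        exact_mod_cast Finset.card_le_card hsub
      rw [ApproxSub] at hs
      linarith
  refine (Finset.sum_le_sum h2).trans ?_
  rw [Finset.sum_add_distrib, ← Finset.sum_filter, ← Finset.mul_sum]
  have h3 : ∑ B ∈ Q, (B.card : ℝ) = Rs.card := by
    have := sum_parts hQ (fun _ => (1 : ℝ))
    simp only [Finset.sum_const, nsmul_eq_mul, mul_one] at this
    exact this.symm
  rw [h3]
  rw [ApproxRefines] at h
  linarith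

namespace SignSys

variable {α β : Type*} [DecidableEq β] {s : ℕ} {Ls Rs : Finset α} {l r : ℕ → α → β}
    {M : ℝ} {v : ℕ → α → α → ℝ}

lemma per_A [DecidableEq α] (hS : SignSys s Ls Rs l r M v) (t : ℕ → ℝ) (i j : ℕ) (hij : i ≤ j)
    (hj : j ≤ s) (G' : Finset (α × α)) (A : Finset α) (hA : A ⊆ Ls) (hAne : A.Nonempty)
    (Q : Finset (Finset α)) (hQ : IsPartition Q Rs) (δ γ : ℝ)
    (hreg : ∀ B ∈ Q, DeltaReg δ G' A B) (hγ0 : 0 < γ) (hγ1 : γ ≤ 1) (hδγ : δ ≤ γ / 8)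
    (hδ : δ ≤ 1 / 2) (E : Finset α)
    (hE : ∀ B ∈ Q, ∀ y ∈ B, y ∉ E → ∃ B' ⊆ B, (B.card : ℝ) ≤ 2 * B'.card ∧
      ∀ y' ∈ B', r i y' = r i y) :
    γ / 32 * ∑ x ∈ A, (((YA Rs v t i A γ \ E) ∩ nb Rs v t j x).card : ℝ) ≤
      ∑ B ∈ Q, ((bmEdges (G' \ gr Ls Rs v t j) A B : ℝ) +
        bmEdges (gr Ls Rs v t j \ G') A B) := by
  set Y := YA Rs v t i A γ \ E with hY
  have h1 : ∀ x ∈ A, ((Y ∩ nb Rs v t j x).card : ℝ) =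
      ∑ B ∈ Q, ((B ∩ (Y ∩ nb Rs v t j x)).card : ℝ) := by
    intro x hx
    have h2 := sum_parts hQ (fun y => if y ∈ Y ∩ nb Rs v t j x then (1 : ℝ) else 0)
    simp only [Finset.sum_boole, Finset.filter_mem_eq_inter] at h2
    rw [← h2]
    have h3 : Y ∩ nb Rs v t j x ⊆ Rs := fun y hy => (mem_nb.1 (Finset.mem_inter.1 hy).2).1
    rw [Finset.inter_eq_right.2 h3]
  rw [Finset.sum_congr rfl h1, Finset.sum_comm, Finset.mul_sum]
  refine Finset.sum_le_sum fun B hB => ?_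
  by_cases hc : ∃ y ∈ B, y ∈ Y
  · obtain ⟨y0, hy0B, hy0Y⟩ := hc
    rw [hY, Finset.mem_sdiff, YA, Finset.mem_filter] at hy0Y
    obtain ⟨⟨hy0R, hw⟩, hy0E⟩ := hy0Y
    obtain ⟨B', hB'B, hB'c, hB'r⟩ := hE B hB y0 hy0B hy0E
    have hBR : B ⊆ Rs := hQ.2.1 B hB
    have hle : ∑ x ∈ A, ((B ∩ (Y ∩ nb Rs v t j x)).card : ℝ) ≤
        bmEdges (gr Ls Rs v t j) A B := by
      rw [bmEdges_gr Ls Rs v t j A B hA]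
      push_cast
      refine Finset.sum_le_sum fun x _ => ?_
      exact_mod_cast Finset.card_le_card
        (Finset.inter_subset_inter_left Finset.inter_subset_right)
    have h0 : bmEdges (gr Ls Rs v t j) (A.filter fun x => ¬ y0 ∈ nb Rs v t i x) B' = 0 := by
      rw [bmEdges_eq, Finset.card_eq_zero, Finset.filter_eq_empty_iff]
      rintro ⟨x, y⟩ hq ⟨hx, hy⟩
      rw [mem_gr] at hq
      rw [Finset.mem_filter] at hx
      refine hx.2 ?_
      exact hS.nb_closed t hq.1 (hij.trans hj) (nb_anti Rs v t hij x hq.2) hy0R (hB'r y hy).symm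
    have hcA : γ / 8 * A.card ≤ (A.filter fun x => ¬ y0 ∈ nb Rs v t i x).card := by
      have h3 := Finset.card_filter_add_card_filter_not (s := A) (fun x => y0 ∈ nb Rs v t i x)
      have h4 : wt Rs v t i A y0 = ((A.filter fun x => y0 ∈ nb Rs v t i x).card : ℝ) := by
        rw [wt_eq, Finset.sum_boole]
      rw [h4] at hw
      have h5 : ((A.filter fun x => y0 ∈ nb Rs v t i x).card : ℝ) +
        (A.filter fun x => ¬ y0 ∈ nb Rs v t i x).card = A.card := by exact_mod_cast h3
      linarith
    have := pair_mod (gr Ls Rs v t j) G' A B _ B' δ γ (hreg B hB) h0 (Finset.filter_subset _ _)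
      hB'B hAne (hQ.1 B hB) hγ0 hγ1 hδγ hδ hcA hB'c
    refine le_trans ?_ this
    gcongr
  · have hz : ∀ x ∈ A, ((B ∩ (Y ∩ nb Rs v t j x)).card : ℝ) = 0 := by
      intro x _
      rw [Nat.cast_eq_zero, Finset.card_eq_zero, Finset.eq_empty_iff_forall_notMem]
      intro y hy
      rw [Finset.mem_inter, Finset.mem_inter] at hy
      exact hc ⟨y, hy.1, hy.2.1⟩
    rw [Finset.sum_congr rfl hz, Finset.sum_const_zero, mul_zero]
    positivity

end SignSys

lemma final_arith (j : ℕ) (γ δ a n U W X : ℝ) (ha : 0 < a) (hn : 0 < n) (hγ : 0 < γ)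
    (hδ : δ ≤ γ ^ 2 / 1024) (hU : γ * a < U) (hX : X ≤ γ / 64 * (a * (2 ^ j * n)))
    (htot : 2 ^ j * (27 / 256 * (U * n)) - X ≤ 2 ^ j * W)
    (hup : γ / 32 * W ≤ δ * (a * n)) : False := by
  have h9 : 2 ^ j * (γ / 16 * (a * n)) ≤ 2 ^ j * W := by
    have : 2 ^ j * (27 / 256 * (γ * a * n)) ≤ 2 ^ j * (27 / 256 * (U * n)) := by gcongr
    have h10 : 0 ≤ 2 ^ j * (γ * (a * n)) := by positivity
    linarith only [this, h10, htot, hX]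
  have h10 := le_of_mul_le_mul_left h9 (by positivity)
  have h11 : γ / 32 * (γ / 16 * (a * n)) ≤ γ / 32 * W := by gcongr
  have h12 : δ * (a * n) ≤ γ ^ 2 / 1024 * (a * n) := by gcongr
  have h13 : 0 < γ ^ 2 * (a * n) := by positivity
  linarith only [h11, h12, h13, hup]

lemma final_refines {α : Type*} [DecidableEq α] {s : ℕ} {Ls Rs : Finset α}
    {L R : ℕ → Finset (Finset α)} {M : ℝ} {v : ℕ → α → α → ℝ}
    (hS : SignSys s Ls Rs (fun k => partOf (L k)) (fun k => partOf (R k)) M v) (hM : 0 < M)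
    (hLne : Ls.Nonempty) (hRne : Rs.Nonempty)
    (t : ℕ → ℝ) (ht : ∀ k, t k = 1 ∨ t k = -1) (i j : ℕ) (hij : i ≤ j)
    (hj : j ≤ s) (hLi : IsPartition (L i) Ls) (hRi : IsPartition (R i) Rs)
    (P Q : Finset (Finset α)) (hP : IsPartition P Ls) (hQ : IsPartition Q Rs) (δ γ : ℝ)
    (hγ0 : 0 < γ) (hδγ : δ ≤ γ ^ 2 / 1024) (hγM : 8 / Real.sqrt M ≤ γ / 64)
    (hreg : DeltaRegPartition δ (gr Ls Rs v t j) Ls Rs P Q)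
    (hQR : ApproxRefines ((2 : ℝ) ^ (-9 : ℤ)) Q (R i) Rs) :
    ApproxRefines γ P (L i) Ls := by
  rw [ApproxRefines]
  by_contra hcon
  rw [not_le] at hcon
  set bad := P.filter fun q => ¬ ApproxMem γ q (L i) with hbad
  obtain ⟨G', hG', hmod, hreg⟩ := hreg
  set g := gr Ls Rs v t j with hg
  have hgs : g ⊆ Ls ×ˢ Rs := Finset.filter_subset _ _
  have hPsum : ∑ A ∈ P, (A.card : ℝ) = Ls.card := by
    have := sum_parts hP (fun _ => (1 : ℝ))
    simp only [Finset.sum_const, nsmul_eq_mul, mul_one] at this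
    exact this.symm
  set U := ∑ q ∈ bad, (q.card : ℝ) with hU
  have hUle : U ≤ Ls.card := by
    rw [← hPsum]
    exact Finset.sum_le_sum_of_subset_of_nonneg (Finset.filter_subset _ _)
      fun _ _ _ => by positivity
  have hl : (0 : ℝ) < Ls.card := by exact_mod_cast Finset.card_pos.2 hLne
  have hr : (0 : ℝ) < Rs.card := by exact_mod_cast Finset.card_pos.2 hRne
  have hγ1 : γ ≤ 1 := by
    by_contra h
    rw [not_le] at h
    nlinarith
  have hδ8 : δ ≤ γ / 8 := by nlinarith
  have hδ2 : δ ≤ 1 / 2 := by linarith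
  set E := Rs.filter fun y => ¬ ∃ t ∈ R i, ApproxSub ((2 : ℝ) ^ (-9 : ℤ)) (partOf Q y) t ∧ y ∈ t
    with hEd
  have hEc : (E.card : ℝ) ≤ 1 / 256 * Rs.card := by
    have := exc_card Rs Q (R i) hQ ((2 : ℝ) ^ (-9 : ℤ)) (by positivity) hQR
    rw [← hEd] at this
    refine this.trans (le_of_eq ?_)
    norm_num
  have hE : ∀ B ∈ Q, ∀ y ∈ B, y ∉ E → ∃ B' ⊆ B, (B.card : ℝ) ≤ 2 * B'.card ∧
      ∀ y' ∈ B', partOf (R i) y' = partOf (R i) y := by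
    intro B hB y hy hyE
    have : ∃ t ∈ R i, ApproxSub ((2 : ℝ) ^ (-9 : ℤ)) (partOf Q y) t ∧ y ∈ t := by
      by_contra h
      exact hyE (Finset.mem_filter.2 ⟨hQ.2.1 B hB hy, h⟩)
    obtain ⟨T, hT, hs, hyT⟩ := this
    rw [partOf_eq hQ hB hy, ApproxSub] at hs
    refine ⟨B ∩ T, Finset.inter_subset_left, ?_, ?_⟩
    · have h4 := Finset.card_sdiff_add_card_inter B T
      have h4' : ((B \ T).card : ℝ) + (B ∩ T).card = B.card := by exact_mod_cast h4
      have h5 : ((2 : ℝ) ^ (-9 : ℤ)) ≤ 1 / 2 := by norm_num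
      have h6 : (0 : ℝ) ≤ B.card := by positivity
      have h7 := mul_le_mul_of_nonneg_right h5 h6
      have h8 := hs.le.trans h7
      linarith only [h8, h4', h6]
    · intro y' hy'
      rw [partOf_eq hRi hT (Finset.mem_inter.1 hy').2, partOf_eq hRi hT hyT]
  obtain ⟨n, hn⟩ : ∃ n : ℝ, n = (Rs.card : ℝ) / 2 ^ j := ⟨_, rfl⟩
  have hn0 : 0 < n := by rw [hn]; positivity
  -- the number of edges of `g`
  have hgc : (g.card : ℝ) = Ls.card * n := by
    rw [← bmEdges_all g Ls Rs hgs, hg, bmEdges_gr Ls Rs v t j Ls Rs (Finset.Subset.refl _)]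
    push_cast
    have : ∀ x ∈ Ls, ((Rs ∩ nb Rs v t j x).card : ℝ) = n := by
      intro x hx
      rw [show Rs ∩ nb Rs v t j x = nb Rs v t j x from
        Finset.inter_eq_right.2 (Finset.filter_subset _ _), hn,
        eq_div_iff (by positivity), mul_comm]
      exact_mod_cast hS.card_nb t ht hx j hj
    rw [Finset.sum_congr rfl this, Finset.sum_const, nsmul_eq_mul]
  -- upper bound
  have hup : ∑ A ∈ bad, (γ / 32 * ∑ x ∈ A, (((YA Rs v t i A γ \ E) ∩ nb Rs v t j x).card : ℝ)) ≤
      δ * g.card := by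
    refine le_trans ?_ hmod
    have h1 : ∀ A ∈ bad,
        γ / 32 * ∑ x ∈ A, (((YA Rs v t i A γ \ E) ∩ nb Rs v t j x).card : ℝ) ≤
        ∑ B ∈ Q, ((bmEdges (G' \ g) A B : ℝ) + bmEdges (g \ G') A B) := by
      intro A hA
      rw [hbad, Finset.mem_filter] at hA
      exact hS.per_A t i j hij hj G' A (hP.2.1 A hA.1) (hP.1 A hA.1) Q hQ δ γ (hreg A hA.1) hγ0
        hγ1 hδ8 hδ2 E hE
    refine (Finset.sum_le_sum h1).trans ?_
    refine (Finset.sum_le_sum_of_subset_of_nonneg (Finset.filter_subset _ _)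
      (fun _ _ _ => Finset.sum_nonneg fun _ _ => by positivity)).trans (le_of_eq ?_)
    simp_rw [Finset.sum_add_distrib]
    have h2 := bmEdges_sum (G' \ g) Ls Rs (Finset.sdiff_subset.trans hG') P Q hP hQ
    have h3 := bmEdges_sum (g \ G') Ls Rs (Finset.sdiff_subset.trans hgs) P Q hP hQ
    rw [← h2, ← h3]
    push_cast
    rfl
  -- deviation
  have hdev := hS.deviation hM t ht j hj (fun y => if y ∈ E then (1 : ℝ) else 0)
    (fun z => by split_ifs <;> simp)
  have hEc' : ∑ y ∈ Rs, (if y ∈ E then (1 : ℝ) else 0) = E.card := by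
    rw [Finset.sum_boole, Finset.filter_mem_eq_inter,
      Finset.inter_eq_right.2 (Finset.filter_subset _ _)]
  have hEn : ∀ x, ∑ y ∈ nb Rs v t j x, (if y ∈ E then (1 : ℝ) else 0) =
      ((E ∩ nb Rs v t j x).card : ℝ) := by
    intro x
    rw [Finset.sum_boole, Finset.filter_mem_eq_inter, Finset.inter_comm]
  rw [hEc'] at hdev
  simp_rw [hEn] at hdev
  set D : α → ℝ := fun x => |2 ^ j * ((E ∩ nb Rs v t j x).card : ℝ) - E.card| with hD
  have hDsum : ∑ A ∈ bad, ∑ x ∈ A, D x ≤ γ / 64 * (Ls.card * Rs.card) := by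
    calc ∑ A ∈ bad, ∑ x ∈ A, D x ≤ ∑ A ∈ P, ∑ x ∈ A, D x :=
          Finset.sum_le_sum_of_subset_of_nonneg (Finset.filter_subset _ _)
            (fun _ _ _ => Finset.sum_nonneg fun _ _ => abs_nonneg _)
      _ = ∑ x ∈ Ls, D x := (sum_parts hP D).symm
      _ ≤ 8 * (Ls.card * Rs.card / Real.sqrt M) := hdev
      _ = 8 / Real.sqrt M * (Ls.card * Rs.card) := by ring
      _ ≤ _ := by gcongr
  -- lower bound
  have hlow : ∀ A ∈ bad, 2 ^ j * (27 / 256 * (A.card * n)) - ∑ x ∈ A, D x ≤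
      2 ^ j * ∑ x ∈ A, (((YA Rs v t i A γ \ E) ∩ nb Rs v t j x).card : ℝ) := by
    intro A hA
    rw [hbad, Finset.mem_filter] at hA
    have hALs := hP.2.1 A hA.1
    have h1 := hS.YA_edges t ht i j hij hj A hALs (hP.1 A hA.1) γ hγ0 hγ1
      (bad_fibre Ls (L i) hLi A hALs γ hA.2)
    have h2 : ∀ x ∈ A, 2 ^ j * ((YA Rs v t i A γ ∩ nb Rs v t j x).card : ℝ) -
        (1 / 256 * Rs.card + D x) ≤
        2 ^ j * (((YA Rs v t i A γ \ E) ∩ nb Rs v t j x).card : ℝ) := by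
      intro x _
      have h3 : (YA Rs v t i A γ ∩ nb Rs v t j x).card ≤
          ((YA Rs v t i A γ \ E) ∩ nb Rs v t j x).card + (E ∩ nb Rs v t j x).card := by
        refine (Finset.card_le_card fun y hy => ?_).trans (Finset.card_union_le _ _)
        rw [Finset.mem_inter] at hy
        rw [Finset.mem_union, Finset.mem_inter, Finset.mem_inter, Finset.mem_sdiff]
        by_cases h : y ∈ E
        · exact Or.inr ⟨h, hy.2⟩
        · exact Or.inl ⟨⟨hy.1, h⟩, hy.2⟩
      have h3' : ((YA Rs v t i A γ ∩ nb Rs v t j x).card : ℝ) ≤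
          ((YA Rs v t i A γ \ E) ∩ nb Rs v t j x).card + (E ∩ nb Rs v t j x).card := by
        exact_mod_cast h3
      have h4 : 2 ^ j * ((E ∩ nb Rs v t j x).card : ℝ) - E.card ≤ D x := le_abs_self _
      have h5 := mul_le_mul_of_nonneg_left h3' (by positivity : (0 : ℝ) ≤ 2 ^ j)
      linarith
    have h6 := Finset.sum_le_sum h2
    rw [Finset.sum_sub_distrib, Finset.sum_add_distrib, ← Finset.mul_sum, ← Finset.mul_sum,
      ← Finset.mul_sum, Finset.sum_const, nsmul_eq_mul] at h6
    have h7 := mul_le_mul_of_nonneg_left h1 (by positivity : (0 : ℝ) ≤ 2 ^ j)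
    have h8 : (Rs.card : ℝ) = 2 ^ j * n := by rw [hn]; field_simp
    rw [← hn] at h7
    rw [h8] at h6
    linarith only [h6, h7]
  have htot := Finset.sum_le_sum hlow
  rw [Finset.sum_sub_distrib, ← Finset.mul_sum, ← Finset.mul_sum, ← Finset.mul_sum,
    ← Finset.sum_mul, ← hU] at htot
  rw [← Finset.mul_sum] at hup
  set W := ∑ A ∈ bad, ∑ x ∈ A, (((YA Rs v t i A γ \ E) ∩ nb Rs v t j x).card : ℝ) with hW
  have h8 : (Rs.card : ℝ) = 2 ^ j * n := by rw [hn]; field_simp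
  rw [h8] at hDsum
  rw [hgc] at hup
  exact final_arith j γ δ Ls.card n U W _ hl hn0 hγ0 hδγ hcon hDsum htot hup

lemma gamma_numerics (M δ : ℝ) (hM : 4096 ≤ M) :
    0 < max ((2 : ℝ) ^ 5 * Real.sqrt δ) (32 / M ^ ((1 : ℝ) / 6)) ∧
    δ ≤ (max ((2 : ℝ) ^ 5 * Real.sqrt δ) (32 / M ^ ((1 : ℝ) / 6))) ^ 2 / 1024 ∧
    8 / Real.sqrt M ≤ (max ((2 : ℝ) ^ 5 * Real.sqrt δ) (32 / M ^ ((1 : ℝ) / 6))) / 64 := by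
  have hM0 : 0 < M := by linarith
  obtain ⟨u, hu⟩ : ∃ u : ℝ, u = M ^ ((1 : ℝ) / 6) := ⟨_, rfl⟩
  have hu4 : 4 ≤ u := by
    have h1 : (4096 : ℝ) ^ ((1 : ℝ) / 6) ≤ M ^ ((1 : ℝ) / 6) :=
      Real.rpow_le_rpow (by norm_num) hM (by norm_num)
    have h2 : (4096 : ℝ) ^ ((1 : ℝ) / 6) = 4 := by
      rw [show (4096 : ℝ) = 4 ^ (6 : ℝ) by norm_num, ← Real.rpow_mul (by norm_num)]
      norm_num
    rw [hu, ← h2]; exact h1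
  have hsq : Real.sqrt M = u ^ 3 := by
    rw [hu, Real.sqrt_eq_rpow, ← Real.rpow_natCast, ← Real.rpow_mul hM0.le]
    norm_num
  rw [← hu, hsq]
  have hu0 : 0 < u := by linarith
  have hγ : 0 < 32 / u := by positivity
  refine ⟨lt_max_of_lt_right hγ, ?_, ?_⟩
  · rcases le_or_gt δ 0 with h | h
    · exact h.trans (by positivity)
    · have h1 := le_max_left ((2 : ℝ) ^ 5 * Real.sqrt δ) (32 / u)
      have h2 : ((2 : ℝ) ^ 5 * Real.sqrt δ) ^ 2 ≤ (max ((2 : ℝ) ^ 5 * Real.sqrt δ) (32 / u)) ^ 2 := by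
        gcongr
      rw [mul_pow, Real.sq_sqrt h.le] at h2
      linarith
  · have h1 := le_max_right ((2 : ℝ) ^ 5 * Real.sqrt δ) (32 / u)
    have h2 : 8 / u ^ 3 ≤ 32 / u / 64 := by
      rw [div_div, div_le_div_iff₀ (by positivity) (by positivity)]
      nlinarith [mul_nonneg hu0.le (by nlinarith : 0 ≤ u ^ 2 - 16)]
    linarith

lemma isPartition_single {α : Type*} (S : Finset α) (hS : S.Nonempty) :
    IsPartition ({S} : Finset (Finset α)) S := by
  refine ⟨?_, ?_, ?_⟩
  · intro p hp; rw [Finset.mem_singleton] at hp; rw [hp]; exact hS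
  · intro p hp; rw [Finset.mem_singleton] at hp; rw [hp]
  · intro x hx
    refine ⟨S, ⟨Finset.mem_singleton_self S, hx⟩, ?_⟩
    rintro p ⟨hp, -⟩
    exact Finset.mem_singleton.1 hp

lemma sys_exists {α : Type*} [DecidableEq α] (s : ℕ) (hs : 1 ≤ s)
    (Ls Rs : Finset α) (L R : ℕ → Finset (Finset α))
    (hLpart : ∀ i, i ≤ s → IsPartition (L i) Ls)
    (hRpart : ∀ i, i ≤ s → IsPartition (R i) Rs)
    (hLequi : ∀ i, i ≤ s → EquitableParts (L i))
    (hRequi : ∀ i, i ≤ s → EquitableParts (R i))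
    (hLref : ∀ i, i < s → Refines (L (i + 1)) (L i))
    (hRref : ∀ i, i < s → Refines (R (i + 1)) (R i))
    (hL0 : L 0 = {Ls}) (hR0 : R 0 = {Rs}) (hLne : Ls.Nonempty) (hRne : Rs.Nonempty)
    (hRpow : ∀ i, 1 ≤ i → i ≤ s → ∃ k, (R i).card = 2 ^ k)
    (hR1 : 2 ^ 200 ≤ (R 1).card)
    (hRgrow : ∀ i, 1 ≤ i → i < s → 4 * (R i).card ≤ (R (i + 1)).card)
    (hLcard : ∀ i, 1 ≤ i → i ≤ s →
      ((L i).card : ℝ) = (2 : ℝ) ^ (((R i).card : ℝ) / (2 : ℝ) ^ (i + 10))) :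
    ∃ v, SignSys s Ls Rs (fun k => partOf (L k)) (fun k => partOf (R k)) ((R 1).card : ℝ) v := by
  have hex : ∀ i, ∃ k, 1 ≤ i → i ≤ s → (R i).card = 2 ^ k := by
    intro i
    by_cases h : 1 ≤ i ∧ i ≤ s
    · obtain ⟨k, hk⟩ := hRpow i h.1 h.2
      exact ⟨k, fun _ _ => hk⟩
    · exact ⟨0, fun h1 h2 => absurd ⟨h1, h2⟩ h⟩
  choose a ha using hex
  have ha1 : 200 ≤ a 1 := by
    rw [ha 1 le_rfl hs] at hR1
    exact (Nat.pow_le_pow_iff_right (by norm_num)).1 hR1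
  have hgrow : ∀ i, 1 ≤ i → i < s → a i + 2 ≤ a (i + 1) := by
    intro i h1 h2
    have h := hRgrow i h1 h2
    rw [ha i h1 h2.le, ha (i + 1) (by omega) (by omega)] at h
    refine (Nat.pow_le_pow_iff_right (a := 2) (by norm_num)).1 ?_
    rw [pow_add]; linarith
  obtain ⟨v, hv⟩ := signs_exist s Ls Rs L R hLpart hRpart hLequi hRequi hLref hRref
    (by rw [hL0]; rfl) (by rw [hR0]; rfl) hLne hRne a ha ha1 hgrow hLcard
  have hM : ((R 1).card : ℝ) = 2 ^ a 1 := by rw [ha 1 le_rfl hs]; push_cast; rfl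
  refine ⟨v, ⟨fun k hk => (hv k hk).1, fun k hk => (hv k hk).2.1, fun k hk => (hv k hk).2.2.1,
    fun k hk => (hv k hk).2.2.2.1, ?_, ?_, ?_, ?_⟩⟩
  · rw [hM]
    exact fun k hk => (hv k hk).2.2.2.2
  · intro k hk x hx x' hx' h
    exact partOf_refines (hLpart k hk.le) (hLpart (k + 1) hk) (hLref k hk) hx hx' h
  · intro k hk x hx x' hx' h
    exact partOf_refines (hRpart k hk.le) (hRpart (k + 1) hk) (hRref k hk) hx hx' h
  · intro x hx x' hx'
    have hp := hLpart 0 (by omega)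
    have hm : Ls ∈ L 0 := by rw [hL0]; exact Finset.mem_singleton_self _
    show partOf (L 0) x = partOf (L 0) x'
    rw [partOf_eq hp hm hx]
    exact (partOf_eq hp hm hx').symm

/-- The sign pattern of the pair `p`. -/
def pat {α : Type*} (v : ℕ → α → α → ℝ) (s : ℕ) (p : α × α) (m : ℕ) : ℝ :=
  if m < s then v m p.1 p.2 else 1

/-- The partition of the edges of the complete bipartite graph into the graphs of level `j`. -/
def Gpart {α : Type*} [DecidableEq α] (Ls Rs : Finset α) (v : ℕ → α → α → ℝ) (s j : ℕ) :
    Finset (Finset (α × α)) :=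
  (Ls ×ˢ Rs).image fun p => gr Ls Rs v (pat v s p) j

lemma mem_gr_pat {α : Type*} {Ls Rs : Finset α} {v : ℕ → α → α → ℝ} {s j : ℕ} (hj : j ≤ s)
    {p q : α × α} : q ∈ gr Ls Rs v (pat v s p) j ↔
      q ∈ Ls ×ˢ Rs ∧ ∀ m < j, v m q.1 q.2 = v m p.1 p.2 := by
  rw [gr, Finset.mem_filter]
  refine and_congr_right fun _ => forall₂_congr fun m hm => ?_
  rw [pat, if_pos (hm.trans_le hj)]

lemma Gpart_isPartition {α : Type*} [DecidableEq α] (Ls Rs : Finset α) (v : ℕ → α → α → ℝ)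
    (s j : ℕ) (hj : j ≤ s) : IsPartition (Gpart Ls Rs v s j) (Ls ×ˢ Rs) := by
  refine ⟨?_, ?_, ?_⟩
  · intro g hg
    obtain ⟨p, hp, rfl⟩ := Finset.mem_image.1 hg
    exact ⟨p, (mem_gr_pat hj).2 ⟨hp, fun _ _ => rfl⟩⟩
  · intro g hg
    obtain ⟨p, hp, rfl⟩ := Finset.mem_image.1 hg
    exact Finset.filter_subset _ _
  · intro q hq
    refine ⟨gr Ls Rs v (pat v s q) j, ⟨Finset.mem_image_of_mem _ hq,
      (mem_gr_pat hj).2 ⟨hq, fun _ _ => rfl⟩⟩, ?_⟩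
    rintro g ⟨hg, hqg⟩
    obtain ⟨p, hp, rfl⟩ := Finset.mem_image.1 hg
    have h1 := ((mem_gr_pat hj).1 hqg).2
    ext q'
    rw [mem_gr_pat hj, mem_gr_pat hj]
    exact and_congr_right fun _ => forall₂_congr fun m hm => by rw [h1 m hm]

lemma Gpart_refines {α : Type*} [DecidableEq α] (Ls Rs : Finset α) (v : ℕ → α → α → ℝ)
    (s j : ℕ) (hj : j < s) : Refines (Gpart Ls Rs v s (j + 1)) (Gpart Ls Rs v s j) := by
  intro g hg
  obtain ⟨p, hp, rfl⟩ := Finset.mem_image.1 hg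
  refine ⟨_, Finset.mem_image_of_mem _ hp, fun q hq => ?_⟩
  rw [mem_gr_pat hj] at hq
  rw [mem_gr_pat hj.le]
  exact ⟨hq.1, fun m hm => hq.2 m (by omega)⟩

lemma pat_pm {α : Type*} (v : ℕ → α → α → ℝ) (s : ℕ)
    (hv : ∀ k < s, ∀ x y, v k x y = 1 ∨ v k x y = -1) (p : α × α) (m : ℕ) :
    pat v s p m = 1 ∨ pat v s p m = -1 := by
  rw [pat]
  split_ifs with h
  · exact hv m h _ _
  · exact Or.inl rfl

lemma SignSys.gr_card {α β : Type*} [DecidableEq α] [DecidableEq β] {s : ℕ} {Ls Rs : Finset α}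
    {l r : ℕ → α → β} {M : ℝ} {v : ℕ → α → α → ℝ} (hS : SignSys s Ls Rs l r M v) (t : ℕ → ℝ)
    (ht : ∀ k, t k = 1 ∨ t k = -1) (j : ℕ) (hj : j ≤ s) :
    2 ^ j * (gr Ls Rs v t j).card = Ls.card * Rs.card := by
  rw [← bmEdges_all (gr Ls Rs v t j) Ls Rs (Finset.filter_subset _ _),
    bmEdges_gr Ls Rs v t j Ls Rs (Finset.Subset.refl _), Finset.mul_sum]
  have : ∀ x ∈ Ls, 2 ^ j * (Rs ∩ nb Rs v t j x).card = Rs.card := by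
    intro x hx
    rw [show Rs ∩ nb Rs v t j x = nb Rs v t j x from
      Finset.inter_eq_right.2 (Finset.filter_subset _ _)]
    exact hS.card_nb t ht hx j hj
  rw [Finset.sum_congr rfl this, Finset.sum_const, smul_eq_mul]

end

/-- **Core construction (Lemma 2.8).** -/
theorem core_construction {α : Type*} [DecidableEq α] (s : ℕ)
    (Lside Rside : Finset α) (hdisj : Disjoint Lside Rside)
    (L R : ℕ → Finset (Finset α))
    (hLpart : ∀ i, 1 ≤ i → i ≤ s → IsPartition (L i) Lside)
    (hRpart : ∀ i, 1 ≤ i → i ≤ s → IsPartition (R i) Rside)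
    (hLequi : ∀ i, 1 ≤ i → i ≤ s → EquitableParts (L i))
    (hRequi : ∀ i, 1 ≤ i → i ≤ s → EquitableParts (R i))
    (hLref : ∀ i, 1 ≤ i → i < s → Refines (L (i + 1)) (L i))
    (hRref : ∀ i, 1 ≤ i → i < s → Refines (R (i + 1)) (R i))
    (hRpow : ∀ i, 1 ≤ i → i ≤ s → ∃ k, (R i).card = 2 ^ k)
    (hR1 : 2 ^ 200 ≤ (R 1).card)
    (hRgrow : ∀ i, 1 ≤ i → i < s → 4 * (R i).card ≤ (R (i + 1)).card)
    (hLcard : ∀ i, 1 ≤ i → i ≤ s →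
      ((L i).card : ℝ) = (2 : ℝ) ^ (((R i).card : ℝ) / (2 : ℝ) ^ (i + 10))) :
    ∃ G : ℕ → Finset (Finset (α × α)),
      (∀ j, 1 ≤ j → j ≤ s → IsPartition (G j) (Lside ×ˢ Rside)) ∧
      (∀ j, 1 ≤ j → j ≤ s → EquitableParts (G j)) ∧
      (∀ j, 1 ≤ j → j < s → Refines (G (j + 1)) (G j)) ∧
      (∀ j, 1 ≤ j → j ≤ s → (G j).card = 2 ^ j) ∧
      ∀ j, 1 ≤ j → j ≤ s → ∀ g ∈ G j, ∀ δ : ℝ, δ ≤ (2 : ℝ) ^ (-20 : ℤ) →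
        ∀ (P Q : Finset (Finset α)),
          IsPartition P Lside → IsPartition Q Rside →
          DeltaRegPartition δ g Lside Rside P Q →
          ∀ i, 1 ≤ i → i ≤ j →
            ApproxRefines ((2 : ℝ) ^ (-9 : ℤ)) Q (R i) Rside →
            ApproxRefines (max ((2 : ℝ) ^ 5 * Real.sqrt δ)
              (32 / ((R 1).card : ℝ) ^ ((1 : ℝ) / 6))) P (L i) Lside := by
  rcases Nat.eq_zero_or_pos s with rfl | hs
  · refine ⟨fun _ => ∅, ?_, ?_, ?_, ?_, ?_⟩ <;> intro j h1 h2 <;> omega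
  have hR1pos : 0 < (R 1).card := lt_of_lt_of_le (by positivity) hR1
  have hRne : Rside.Nonempty := by
    obtain ⟨p, hp⟩ := Finset.card_pos.1 hR1pos
    exact ((hRpart 1 le_rfl hs).1 p hp).mono ((hRpart 1 le_rfl hs).2.1 p hp)
  have hLne : Lside.Nonempty := by
    have h := hLcard 1 le_rfl hs
    have h0 : (0 : ℝ) < (L 1).card := by rw [h]; positivity
    have h1 : 0 < (L 1).card := by exact_mod_cast h0
    obtain ⟨p, hp⟩ := Finset.card_pos.1 h1
    exact ((hLpart 1 le_rfl hs).1 p hp).mono ((hLpart 1 le_rfl hs).2.1 p hp)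
  obtain ⟨L', hL'0, hL'⟩ : ∃ L' : ℕ → Finset (Finset α), L' 0 = {Lside} ∧
      ∀ i, 1 ≤ i → L' i = L i :=
    ⟨fun i => if i = 0 then {Lside} else L i, by simp, fun i hi => if_neg (by omega)⟩
  obtain ⟨R', hR'0, hR'⟩ : ∃ R' : ℕ → Finset (Finset α), R' 0 = {Rside} ∧
      ∀ i, 1 ≤ i → R' i = R i :=
    ⟨fun i => if i = 0 then {Rside} else R i, by simp, fun i hi => if_neg (by omega)⟩
  have hL'part : ∀ i, i ≤ s → IsPartition (L' i) Lside := by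
    intro i hi
    rcases Nat.eq_zero_or_pos i with rfl | h
    · rw [hL'0]; exact isPartition_single _ hLne
    · rw [hL' i h]; exact hLpart i h hi
  have hR'part : ∀ i, i ≤ s → IsPartition (R' i) Rside := by
    intro i hi
    rcases Nat.eq_zero_or_pos i with rfl | h
    · rw [hR'0]; exact isPartition_single _ hRne
    · rw [hR' i h]; exact hRpart i h hi
  have hL'equi : ∀ i, i ≤ s → EquitableParts (L' i) := by
    intro i hi
    rcases Nat.eq_zero_or_pos i with rfl | h
    · rw [hL'0]; intro p hp q hq
      rw [Finset.mem_singleton.1 hp, Finset.mem_singleton.1 hq]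
    · rw [hL' i h]; exact hLequi i h hi
  have hR'equi : ∀ i, i ≤ s → EquitableParts (R' i) := by
    intro i hi
    rcases Nat.eq_zero_or_pos i with rfl | h
    · rw [hR'0]; intro p hp q hq
      rw [Finset.mem_singleton.1 hp, Finset.mem_singleton.1 hq]
    · rw [hR' i h]; exact hRequi i h hi
  have hL'ref : ∀ i, i < s → Refines (L' (i + 1)) (L' i) := by
    intro i hi
    rcases Nat.eq_zero_or_pos i with rfl | h
    · rw [hL'0]; intro p hp
      exact ⟨Lside, Finset.mem_singleton_self _, (hL'part (0 + 1) hi).2.1 p hp⟩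
    · rw [hL' i h, hL' (i + 1) (by omega)]; exact hLref i h hi
  have hR'ref : ∀ i, i < s → Refines (R' (i + 1)) (R' i) := by
    intro i hi
    rcases Nat.eq_zero_or_pos i with rfl | h
    · rw [hR'0]; intro p hp
      exact ⟨Rside, Finset.mem_singleton_self _, (hR'part (0 + 1) hi).2.1 p hp⟩
    · rw [hR' i h, hR' (i + 1) (by omega)]; exact hRref i h hi
  obtain ⟨v, hS⟩ := sys_exists s hs Lside Rside L' R' hL'part hR'part hL'equi hR'equi hL'ref
    hR'ref hL'0 hR'0 hLne hRne (fun i h1 h2 => by rw [hR' i h1]; exact hRpow i h1 h2)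
    (by rw [hR' 1 le_rfl]; exact hR1)
    (fun i h1 h2 => by rw [hR' i h1, hR' (i + 1) (by omega)]; exact hRgrow i h1 h2)
    (fun i h1 h2 => by rw [hR' i h1, hL' i h1]; exact hLcard i h1 h2)
  have hcard : ∀ j, j ≤ s → ∀ g ∈ Gpart Lside Rside v s j,
      2 ^ j * g.card = Lside.card * Rside.card := by
    intro j hj g hg
    obtain ⟨p, hp, rfl⟩ := Finset.mem_image.1 hg
    exact hS.gr_card _ (pat_pm v s hS.pm p) j hj
  have hequi : ∀ j, j ≤ s → EquitableParts (Gpart Lside Rside v s j) := by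
    intro j hj g hg g' hg'
    have h1 := (hcard j hj g hg).trans (hcard j hj g' hg').symm
    exact Nat.eq_of_mul_eq_mul_left (by positivity) h1
  refine ⟨Gpart Lside Rside v s, fun j _ hj => Gpart_isPartition Lside Rside v s j hj,
    fun j _ hj => hequi j hj, fun j _ hj => Gpart_refines Lside Rside v s j hj, ?_, ?_⟩
  · intro j _ hj
    obtain ⟨x, hx⟩ := hLne
    obtain ⟨y, hy⟩ := hRne
    have hm := Finset.mem_image_of_mem (fun p => gr Lside Rside v (pat v s p) j)
      (Finset.mk_mem_product hx hy)
    have h1 := equi_card (Gpart_isPartition Lside Rside v s j hj) (hequi j hj) hm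
    have h2 := hcard j hj _ hm
    have h3 := Finset.card_pos.2 ((Gpart_isPartition Lside Rside v s j hj).1 _ hm)
    rw [Finset.card_product, ← h2, mul_comm] at h1
    exact Nat.eq_of_mul_eq_mul_right h3 h1
  · intro j _ hj g hg δ _ P Q hP hQ hreg i hi hij hQR
    obtain ⟨p, hp, rfl⟩ := Finset.mem_image.1 hg
    have hM : (4096 : ℝ) ≤ ((R 1).card : ℝ) := by
      have : 4096 ≤ (R 1).card := le_trans (by norm_num) hR1
      exact_mod_cast this
    obtain ⟨h1, h2, h3⟩ := gamma_numerics ((R 1).card : ℝ) δ hM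
    rw [hR' 1 le_rfl] at hS
    have := final_refines hS (by linarith) hLne hRne (pat v s p) (pat_pm v s hS.pm p) i j hij hj
      (hL'part i (hij.trans hj)) (hR'part i (hij.trans hj)) P Q hP hQ δ _ h1 h2 h3 hreg
      (by rw [hR' i hi]; exact hQR)
    rw [hL' i hi] at this
    exact this
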